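/- arXiv:2002.11292 — 2 statements merged into one kernel-verified Lean document; each statement's English description precedes it below -/
import Mathlib

section
/- With the notation of the context, C^{BR_U}_*(X;ℤ)_X = (C^{BR_U}_n(X;ℤ)_X, ∂^{BR_U}_n)_{n∈ℤ} is a chain complex; that is, ∂^{BR_U}_{n−1} ∘ ∂^{BR_U}_n = 0 for every integer n. -/
/-!
Deletion of an entry and its conjugating variant are the values `c = 1` and `c = g_p` of a single
operator, which deletes the entry `p` and twists by an arbitrary `c : G`. Since the image of `φ` is
central, for `i ≤ j` twisting by `c'` at `j + 1` and then by `c'⁻¹ c c'` at `i` is the same as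
twisting by `c` at `i` and then by `c'` at `j`. The twist at `j + 1` turns the entry `g_i` into
`c'⁻¹ g_i c'`, so the two families of faces satisfy the precubical identities, and their signed sum
squares to zero.
-/

open FreeAbelianGroup
open scoped TensorProduct

namespace GAlex

variable {G M A : Type*} [Group G] [AddCommGroup M] [DistribMulAction Gᵐᵒᵖ M] [AddCommGroup A]

/-- The right action `m · g` of a group element `g : G` on `m : M`
(coming from the right `ℤ[G]`-module structure on `M`). -/
def ract (m : M) (g : G) : M := MulOpposite.op g • m

variable (φ : G →* G)

/-- The operation `(m,g) ⊳ (n,h) = (mh + n(φ(h) − h), h⁻¹gh)` of the `G`-Alexander biquandle. -/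
def under (x y : M × G) : M × G :=
  (ract x.1 y.2 + ract y.1 (φ y.2) - ract y.1 y.2, y.2⁻¹ * x.2 * y.2)

/-- The operation `(m,g) ⊚ (n,h) = (mφ(h), g)` of the `G`-Alexander biquandle. -/
def _root_.GAlex.over (x y : M × G) : M × G := (ract x.1 (φ y.2), x.2)

/-- The face `g_{⟨p⟩}` (delete the `p`-th entry). -/
def dGdel (n : ℕ) (p : Fin (n + 1)) (g : Fin (n + 1) → G) : Fin n → G :=
  fun j => g (p.succAbove j)

/-- The face `g_{⟨⊲p⟩}` (conjugate the first entries by `g p` and delete the `p`-th entry). -/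
def dGconj (n : ℕ) (p : Fin (n + 1)) (g : Fin (n + 1) → G) : Fin n → G :=
  fun j => if (j : ℕ) < (p : ℕ) then (g p)⁻¹ * g j.castSucc * g p else g j.succ

/-- The face `m_{⟨p⟩}` (merge the two entries adjacent to position `p`;
for `p = 0` drop the first entry). -/
def dMmer (n : ℕ) (p : Fin (n + 1)) (m : Fin (n + 1) → M) : Fin n → M :=
  fun j =>
    if (j : ℕ) + 1 < (p : ℕ) then m j.castSucc
    else if (j : ℕ) + 1 = (p : ℕ) then m j.castSucc + m j.succ
    else m j.succ

/-- The face `m_{⟨⊲p⟩}`. -/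
def dMconj (n : ℕ) (p : Fin (n + 1)) (g : Fin (n + 1) → G) (m : Fin (n + 1) → M) : Fin n → M :=
  fun j =>
    if (j : ℕ) + 1 < (p : ℕ) then ract (m j.castSucc) (g p)
    else if (j : ℕ) + 1 = (p : ℕ) then ract (m j.castSucc) (g p) + ract (m j.succ) (φ (g p))
    else ract (m j.succ) (φ (g p))

/-- The boundary map `∂^{BR_U}_{n+1} : C^{BR_U}_{n+1}(X;ℤ) → C^{BR_U}_n(X;ℤ)`
(the boundary `∂^{BR_U}_k` is `0` for `k ≤ 1`, which agrees with this formula at `n = 0`). -/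
def dBRU (n : ℕ) :
    FreeAbelianGroup ((Fin (n + 1) → G) × (Fin (n + 1) → M)) →+
      FreeAbelianGroup ((Fin n → G) × (Fin n → M)) :=
  FreeAbelianGroup.lift fun x =>
    ∑ p : Fin (n + 1),
      (-1 : ℤ) ^ (p : ℕ) •
        (FreeAbelianGroup.of (dGdel n p x.1, dMmer n p x.2) -
          FreeAbelianGroup.of (dGconj n p x.1, dMconj φ n p x.1 x.2))

/-- The birack boundary map `∂^{BR}_{n+1} : C^{BR}_{n+1}(X;ℤ) → C^{BR}_n(X;ℤ)`
for the `G`-Alexander biquandle `X = M × G` (with trivial `X`-set). -/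
def dBR (n : ℕ) :
    FreeAbelianGroup (Fin (n + 1) → M × G) →+ FreeAbelianGroup (Fin n → M × G) :=
  FreeAbelianGroup.lift fun x =>
    ∑ p : Fin (n + 1),
      (-1 : ℤ) ^ (p : ℕ) •
        (FreeAbelianGroup.of (fun j => x (p.succAbove j)) -
          FreeAbelianGroup.of (fun j : Fin n =>
            if (j : ℕ) < (p : ℕ) then under φ (x j.castSucc) (x p)
            else GAlex.over φ (x j.succ) (x p)))

/-- `γ_n((m₁,g₁),…,(m_n,g_n)) = (g₁,…,g_n; m₁−m₂, …, m_{n−1}−m_n, m_n)`. -/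
def gammaMap (n : ℕ) :
    FreeAbelianGroup (Fin n → M × G) →+ FreeAbelianGroup ((Fin n → G) × (Fin n → M)) :=
  FreeAbelianGroup.lift fun x =>
    FreeAbelianGroup.of
      (fun j => (x j).2,
       fun j => (x j).1 - if h : (j : ℕ) + 1 < n then (x ⟨(j : ℕ) + 1, h⟩).1 else 0)

/-- `r_n(g₁,…,g_n; m₁,…,m_n) = ((m₁+⋯+m_n, g₁), (m₂+⋯+m_n, g₂), …, (m_n, g_n))`. -/
def rMap (n : ℕ) :
    FreeAbelianGroup ((Fin n → G) × (Fin n → M)) →+ FreeAbelianGroup (Fin n → M × G) :=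
  FreeAbelianGroup.lift fun p =>
    FreeAbelianGroup.of fun j => ((∑ i ∈ Finset.Ici j, p.2 i), p.1 j)

/-- The boundary map `∂^{BR_U}_{d+1}` of `C^{BR_U}_*(X;ℤ)_X` (the version with `X`-set `X`,
whose degree-`d` chain group is free on `(1+d)`-tuples); it is `0` in degrees `≤ 1`. -/
def dBRUX : (d : ℕ) →
    FreeAbelianGroup ((Fin (d + 2) → G) × (Fin (d + 2) → M)) →+
      FreeAbelianGroup ((Fin (d + 1) → G) × (Fin (d + 1) → M))
  | 0 => 0
  | d + 1 =>
    FreeAbelianGroup.lift fun x =>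
      ∑ i : Fin (d + 2),
        (-1 : ℤ) ^ (i : ℕ) •
          (FreeAbelianGroup.of (dGdel (d + 2) i.succ x.1, dMmer (d + 2) i.succ x.2) -
            FreeAbelianGroup.of (dGconj (d + 2) i.succ x.1, dMconj φ (d + 2) i.succ x.1 x.2))

/-- The boundary map `∂^{BR}_{d+1}` of `C^{BR}_*(X;ℤ)_X` (the version with `X`-set `X`);
it is `0` in degrees `≤ 1`. -/
def dBRX : (d : ℕ) →
    FreeAbelianGroup (Fin (d + 2) → M × G) →+ FreeAbelianGroup (Fin (d + 1) → M × G)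
  | 0 => 0
  | d + 1 =>
    FreeAbelianGroup.lift fun x =>
      ∑ i : Fin (d + 2),
        (-1 : ℤ) ^ (i : ℕ) •
          (FreeAbelianGroup.of (fun j => x (i.succ.succAbove j)) -
            FreeAbelianGroup.of (fun j : Fin (d + 2) =>
              if (j : ℕ) < (i : ℕ) + 1 then under φ (x j.castSucc) (x i.succ)
              else GAlex.over φ (x j.succ) (x i.succ)))

section PrecubicalBoundary

theorem alternatingSum_comp_alternatingSum_eq_zero {B C D : Type*} [AddCommGroup B]
    [AddCommGroup C] [AddCommGroup D] {n : ℕ} (d : Fin (n + 2) → B →+ C)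
    (d' : Fin (n + 1) → C →+ D)
    (h : ∀ i j, i ≤ j → (d' i).comp (d j.succ) = (d' j).comp (d i.castSucc)) :
    (∑ i : Fin (n + 1), (-1 : ℤ) ^ (i : ℕ) • d' i).comp
      (∑ j : Fin (n + 2), (-1 : ℤ) ^ (j : ℕ) • d j) = 0 := by
  ext b
  have h_apply (i j : Fin (n + 1)) (hij : i ≤ j) : d' i (d j.succ b) = d' j (d i.castSucc b) :=
    DFunLike.congr_fun (h i j hij) b
  simp only [AddMonoidHom.comp_apply, AddMonoidHom.finsetSum_apply, AddMonoidHom.smul_apply,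
    AddMonoidHom.zero_apply, map_sum, map_zsmul, Finset.smul_sum, smul_smul,
    Fin.sum_sum_eq_sum_triangle_add]
  refine Finset.sum_eq_zero fun i _ => Finset.sum_eq_zero fun j hij => ?_
  rw [h_apply i j (Finset.mem_Ici.1 hij), ← add_smul, Fin.val_castSucc, Fin.val_succ]
  have signs_cancel :
      (-1 : ℤ) ^ (i : ℕ) * (-1) ^ (j : ℕ) + (-1) ^ ((j : ℕ) + 1) * (-1) ^ (i : ℕ) = 0 := by
    ring
  rw [signs_cancel, zero_smul]

/-- The boundary map `∑ i, (-1)^i (∂ᵢ⁰ - ∂ᵢ¹)` of a precubical set between two consecutive degrees.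
The Boolean argument of `∂` selects the face: `false` for `∂ᵢ⁰` and `true` for `∂ᵢ¹`. -/
def precubicalBoundary {S T : Type*} {n : ℕ} (f : Bool → Fin n → S → T) :
    FreeAbelianGroup S →+ FreeAbelianGroup T :=
  ∑ i : Fin n,
    (-1 : ℤ) ^ (i : ℕ) • (FreeAbelianGroup.map (f false i) - FreeAbelianGroup.map (f true i))

theorem precubicalBoundary_comp_precubicalBoundary_eq_zero {S T U : Type*} {n : ℕ}
    (f : Bool → Fin (n + 2) → S → T) (f' : Bool → Fin (n + 1) → T → U)
    (h : ∀ ε ε' i j, i ≤ j → f' ε i ∘ f ε' j.succ = f' ε' j ∘ f ε i.castSucc) :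
    (precubicalBoundary f').comp (precubicalBoundary f) = 0 := by
  refine alternatingSum_comp_alternatingSum_eq_zero _ _ fun i j hij => ?_
  ext s
  have h_apply (ε ε' : Bool) : f' ε i (f ε' j.succ s) = f' ε' j (f ε i.castSucc s) :=
    congrFun (h ε ε' i j hij) s
  simp only [AddMonoidHom.comp_apply, AddMonoidHom.sub_apply, map_sub,
    FreeAbelianGroup.map_of_apply, h_apply]
  abel

end PrecubicalBoundary

section MapBefore

variable {α : Type*} {n : ℕ}

/-- Delete the entry `p` of a tuple and apply `σ` to the entries before it. This is the common
shape of the two faces of `g`, with `σ` the identity or a conjugation. -/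
def mapBefore (p : Fin (n + 1)) (σ : α → α) (a : Fin (n + 1) → α) : Fin n → α :=
  fun k => if (k : ℕ) < p then σ (a k.castSucc) else a k.succ

theorem mapBefore_id (p : Fin (n + 1)) : mapBefore p (id : α → α) = p.removeNth := by
  funext a k
  simp only [mapBefore, Fin.removeNth_apply, Fin.succAbove, Fin.lt_def, Fin.val_castSucc, id]
  split_ifs <;> rfl

theorem mapBefore_succ_apply_of_le {i j : Fin n} (hij : i ≤ j) (σ : α → α)
    (a : Fin (n + 1) → α) : mapBefore j.succ σ a i = σ (a i.castSucc) :=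
  if_pos (by simpa [Nat.lt_succ_iff] using hij)

theorem mapBefore_castSucc_apply_of_le {i j : Fin n} (hij : i ≤ j) (σ : α → α)
    (a : Fin (n + 1) → α) : mapBefore i.castSucc σ a j = a j.succ :=
  if_neg (by simpa using hij)

theorem mapBefore_mapBefore {σ σ' τ : α → α} (h : Function.Semiconj σ' τ σ) {i j : Fin (n + 1)}
    (hij : i ≤ j) (a : Fin (n + 2) → α) :
    mapBefore i σ (mapBefore j.succ σ' a) = mapBefore j σ' (mapBefore i.castSucc τ a) := by
  funext k
  rw [Fin.le_def] at hij
  simp only [mapBefore, Fin.val_succ, Fin.val_castSucc]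
  rcases lt_or_ge (k : ℕ) i with hki | hik
  · simp (disch := omega) only [if_pos, Fin.castSucc_succ, h.eq]
  · rcases lt_or_ge (k : ℕ) j with hkj | hjk
    · simp (disch := omega) only [if_pos, if_neg, Fin.succ_castSucc]
    · simp (disch := omega) only [if_neg]

end MapBefore

section MergeAt

variable {R N : Type*} [Monoid R] [AddMonoid N] [DistribMulAction R N] {n : ℕ}

/-- Merge the entries `p - 1` and `p` of a tuple, after acting by `r` on the entries before `p` and
by `s` on the others; for `p = 0` the first entry is dropped. This is the common shape of the two
faces of `m`. -/
def mergeAt (p : Fin (n + 1)) (r s : R) (m : Fin (n + 1) → N) : Fin n → N :=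
  fun k =>
    if (k : ℕ) + 1 < p then r • m k.castSucc
    else if (k : ℕ) + 1 = p then r • m k.castSucc + s • m k.succ
    else s • m k.succ

theorem mergeAt_mergeAt {r s r' s' t u : R} (hr : SemiconjBy r' t r) (hrs : SemiconjBy r' u s)
    (hs : SemiconjBy s' u s) {i j : Fin (n + 1)} (hij : i ≤ j) (m : Fin (n + 2) → N) :
    mergeAt i r s (mergeAt j.succ r' s' m) = mergeAt j r' s' (mergeAt i.castSucc t u m) := by
  have hr_smul (x : N) : r • r' • x = r' • t • x := by simp only [← mul_smul, hr.eq]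
  have hrs_smul (x : N) : s • r' • x = r' • u • x := by simp only [← mul_smul, hrs.eq]
  have hs_smul (x : N) : s • s' • x = s' • u • x := by simp only [← mul_smul, hs.eq]
  funext k
  rw [Fin.le_def] at hij
  simp only [mergeAt, Fin.val_succ, Fin.val_castSucc]
  rcases lt_trichotomy ((k : ℕ) + 1) i with hki | hki | hik <;>
  rcases lt_trichotomy ((k : ℕ) + 1) j with hkj | hkj | hjk <;>
  first
    | omega
    | simp (disch := omega) only [if_pos, if_neg, smul_add, add_assoc, Fin.succ_castSucc,
        hr_smul, hrs_smul, hs_smul]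

end MergeAt

section Face

variable {n : ℕ}

/-- The face at `p` twisted by an arbitrary `c : G`: the common generalization of
`(g_{⟨p⟩}; m_{⟨p⟩})`, where `c = 1`, and `(g_{⟨⊲p⟩}; m_{⟨⊲p⟩})`, where `c = g_p`. -/
def twistedFace (p : Fin (n + 1)) (c : G) (x : (Fin (n + 1) → G) × (Fin (n + 1) → M)) :
    (Fin n → G) × (Fin n → M) :=
  (mapBefore p (fun a => c⁻¹ * a * c) x.1,
    mergeAt p (MulOpposite.op c) (MulOpposite.op (φ c)) x.2)

theorem twistedFace_twistedFace (hφ : ∀ g : G, φ g ∈ Subgroup.center G) {i j : Fin (n + 1)}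
    (hij : i ≤ j) (c c' : G) (x : (Fin (n + 2) → G) × (Fin (n + 2) → M)) :
    twistedFace φ i (c'⁻¹ * c * c') (twistedFace φ j.succ c' x) =
      twistedFace φ j c' (twistedFace φ i.castSucc c x) := by
  have h_central (a b : G) : Commute (φ a) b :=
    ((Subgroup.mem_center_iff.1 (hφ a)) b).symm
  have hφ_conj : φ (c'⁻¹ * c * c') = φ c := by
    rw [map_mul, map_mul, map_inv, mul_assoc, h_central c, inv_mul_cancel_left]
  have h_conj : SemiconjBy c' (c'⁻¹ * c * c') c := by
    simp only [SemiconjBy, mul_assoc, mul_inv_cancel_left]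
  have h_semiconj : Function.Semiconj (fun a => c'⁻¹ * a * c') (fun a => c⁻¹ * a * c)
      (fun a => (c'⁻¹ * c * c')⁻¹ * a * (c'⁻¹ * c * c')) := fun a => by group
  refine Prod.ext ?_ ?_
  · exact mapBefore_mapBefore h_semiconj hij x.1
  · simp only [twistedFace, hφ_conj]
    exact mergeAt_mergeAt h_conj.op (h_central c c').symm.op (h_central c' (φ c)).op hij x.2

/-- The two families of faces, indexed as in a precubical set: `(g_{⟨p⟩}; m_{⟨p⟩})` for `false` and
`(g_{⟨⊲p⟩}; m_{⟨⊲p⟩})` for `true`. -/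
def face (ε : Bool) (p : Fin (n + 1)) (x : (Fin (n + 1) → G) × (Fin (n + 1) → M)) :
    (Fin n → G) × (Fin n → M) :=
  twistedFace φ p (bif ε then x.1 p else 1) x

theorem face_false (p : Fin (n + 1)) (x : (Fin (n + 1) → G) × (Fin (n + 1) → M)) :
    face φ false p x = (dGdel n p x.1, dMmer n p x.2) := by
  have h_conj_one : (fun a : G => (1 : G)⁻¹ * a * 1) = id := by
    funext a
    simp only [inv_one, one_mul, mul_one, id]
  refine Prod.ext ?_ ?_
  · simp only [face, twistedFace, cond_false, h_conj_one, mapBefore_id]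
    rfl
  · funext k
    simp only [face, twistedFace, cond_false, map_one, MulOpposite.op_one, mergeAt, one_smul, dMmer]

theorem face_true (p : Fin (n + 1)) (x : (Fin (n + 1) → G) × (Fin (n + 1) → M)) :
    face φ true p x = (dGconj n p x.1, dMconj φ n p x.1 x.2) :=
  rfl

theorem face_comp_face (hφ : ∀ g : G, φ g ∈ Subgroup.center G) (ε ε' : Bool) {i j : Fin (n + 1)}
    (hij : i ≤ j) :
    face (M := M) φ ε i ∘ face φ ε' j.succ = face φ ε' j ∘ face φ ε i.castSucc := by
  funext x
  simp only [Function.comp_apply]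
  set c : G := bif ε then x.1 i.castSucc else 1 with hc
  set c' : G := bif ε' then x.1 j.succ else 1
  have h_left : (bif ε then (face φ ε' j.succ x).1 i else 1) = c'⁻¹ * c * c' := by
    cases ε
    · simp only [hc, cond_false, mul_one, inv_mul_cancel]
    · exact mapBefore_succ_apply_of_le hij (fun a => c'⁻¹ * a * c') x.1
  have h_right : (bif ε' then (face φ ε i.castSucc x).1 j else 1) = c' := by
    cases ε'
    · rfl
    · exact mapBefore_castSucc_apply_of_le hij (fun a => c⁻¹ * a * c) x.1
  calc face φ ε i (face φ ε' j.succ x)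
      = twistedFace φ i (c'⁻¹ * c * c') (twistedFace φ j.succ c' x) := by rw [face, h_left]; rfl
    _ = twistedFace φ j c' (twistedFace φ i.castSucc c x) := twistedFace_twistedFace φ hφ hij c c' x
    _ = face φ ε' j (face φ ε i.castSucc x) := by rw [face, h_right]; rfl

theorem dBRUX_succ (d : ℕ) :
    dBRUX (M := M) φ (d + 1) = precubicalBoundary fun ε (i : Fin (d + 2)) => face φ ε i.succ := by
  ext x
  simp only [dBRUX, FreeAbelianGroup.lift_apply_of, precubicalBoundary,
    AddMonoidHom.finsetSum_apply, AddMonoidHom.smul_apply, AddMonoidHom.sub_apply,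
    FreeAbelianGroup.map_of_apply, face_false, face_true]

end Face

/-- `C^{BR_U}_*(X;ℤ)_X` is a chain complex:
`∂^{BR_U}_{n-1} ∘ ∂^{BR_U}_n = 0` for every `n` (the composites in degrees `≤ 0` vanish
trivially since the chain groups there are zero and the boundary maps are zero). -/
theorem dBRUX_comp_dBRUX_eq_zero (hφ : ∀ g : G, φ g ∈ Subgroup.center G) :
    ∀ d : ℕ, (dBRUX (M := M) φ d).comp (dBRUX (M := M) φ (d + 1)) = 0 := by
  intro d
  cases d with
  | zero => exact AddMonoidHom.zero_comp _
  | succ d =>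
    rw [dBRUX_succ, dBRUX_succ]
    refine precubicalBoundary_comp_precubicalBoundary_eq_zero _ _ fun ε ε' i j hij => ?_
    exact face_comp_face φ hφ ε ε' (Fin.succ_le_succ_iff.2 hij)

end GAlex
end

section
/- Let λ : G → A be a group homomorphism, let n ≥ 1, and let f : C^{gp}_n(M;ℤ)_G → A be a normalized group n-cocycle, i.e. a homomorphism with f(D^{gp}_n(M;ℤ)_G) = 0 and f ∘ ∂^{gp}_{n+1} = 0. Then the composite Φ_{f,λ} := (f ⊗ id_A) ∘ ψ_{n,λ} ∘ γ_n ∘ proj_n : P_n(X;ℤ) → A ⊗_ℤ A vanishes on D_n(X;ℤ) and satisfies Φ_{f,λ} ∘ ∂_{n+1} = 0 on P_{n+1}(X;ℤ); that is, Φ_{f,λ} defines an n-cocycle of the G-Alexander multiple conjugation biquandle X, i.e. a cocycle of the complex C_*(X;ℤ) = P_*(X;ℤ)/D_*(X;ℤ). -/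
open FreeAbelianGroup
open scoped TensorProduct

namespace GAlex

variable {G M A : Type*} [Group G] [AddCommGroup M] [DistribMulAction Gᵐᵒᵖ M] [AddCommGroup A]

variable (φ : G →* G)

/-- The subgroup of `G`-coinvariants relations in `C^{gp}_n(M;ℤ)`:
generated by all `(m₁g,…,m_ng) − (m₁,…,m_n)`. -/
def coinvSub (n : ℕ) : AddSubgroup (FreeAbelianGroup (Fin n → M)) :=
  AddSubgroup.closure
    {z | ∃ (m : Fin n → M) (g : G),
        z = FreeAbelianGroup.of (fun i => ract (m i) g) - FreeAbelianGroup.of m}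

/-- The coinvariant group chain group `C^{gp}_n(M;ℤ)_G`. -/
abbrev CgpG (n : ℕ) : Type _ :=
  FreeAbelianGroup (Fin n → M) ⧸ coinvSub (G := G) (M := M) n

/-- The group-homology boundary map `∂^{gp}_{n+1} : C^{gp}_{n+1}(M;ℤ) → C^{gp}_n(M;ℤ)`
(it is `0` in degrees `≤ 1`, which agrees with this formula at `n = 0`). -/
def dgp (n : ℕ) :
    FreeAbelianGroup (Fin (n + 1) → M) →+ FreeAbelianGroup (Fin n → M) :=
  FreeAbelianGroup.lift fun m =>
    (∑ p : Fin (n + 1), (-1 : ℤ) ^ (p : ℕ) • FreeAbelianGroup.of (dMmer n p m)) +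
      (-1 : ℤ) ^ (n + 1) • FreeAbelianGroup.of fun j : Fin n => m j.castSucc

/-- `|k| = k₁ + ⋯ + k_n`. -/
def wt {n : ℕ} (k : Fin n → Bool) : ℕ := ∑ i, if k i then 1 else 0

/-- `g_{k,i} = φ(g₀^{k₀} ⋯ g_i^{k_i}) · g_{i+1}^{k_{i+1}} ⋯ g_{n-1}^{k_{n-1}}`
(indices written `0`-based; the products are ordered). -/
def gki {n : ℕ} (g : Fin n → G) (k : Fin n → Bool) (i : Fin n) : G :=
  φ ((((List.finRange n).filter fun j => decide (j ≤ i)).map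
        fun j => if k j then g j else 1).prod) *
    (((List.finRange n).filter fun j => decide (i < j)).map
        fun j => if k j then g j else 1).prod

/-- The value of `ψ` on a generator:
`Σ_{k, k₀ = 0} (−1)^{|k|} (m₀ g_{k,0}, …, m_n g_{k,n})`, as an element of the free
abelian group (before passing to coinvariants). -/
def psiVal (n : ℕ) (x : (Fin (n + 1) → G) × (Fin (n + 1) → M)) :
    FreeAbelianGroup (Fin (n + 1) → M) :=
  ∑ k ∈ Finset.univ.filter fun k : Fin (n + 1) → Bool => k 0 = false,
    (-1 : ℤ) ^ wt k • FreeAbelianGroup.of fun i => ract (x.2 i) (gki φ x.1 k i)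

/-- `ψ` as a homomorphism into the free abelian group (before coinvariants). -/
def psiFree (n : ℕ) :
    FreeAbelianGroup ((Fin (n + 1) → G) × (Fin (n + 1) → M)) →+
      FreeAbelianGroup (Fin (n + 1) → M) :=
  FreeAbelianGroup.lift (psiVal φ n)

/-- The homomorphism `ψ : C^{BR_U} → C^{gp}(M;ℤ)_G`. -/
def psiG (n : ℕ) :
    FreeAbelianGroup ((Fin (n + 1) → G) × (Fin (n + 1) → M)) →+
      CgpG (G := G) (M := M) (n + 1) :=
  (QuotientAddGroup.mk' (coinvSub (G := G) (M := M) (n + 1))).comp (psiFree φ n)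

/-- The homomorphism `ψ_{•,λ}`, sending a generator `x` to `ψ(x) ⊗ λ(x₁)` where `x₁` is the
first `G`-entry of `x`. -/
noncomputable def psiLam (lam : G → A) (n : ℕ) :
    FreeAbelianGroup ((Fin (n + 1) → G) × (Fin (n + 1) → M)) →+
      TensorProduct ℤ (CgpG (G := G) (M := M) (n + 1)) A :=
  FreeAbelianGroup.lift fun x =>
    (QuotientAddGroup.mk' (coinvSub (G := G) (M := M) (n + 1)) (psiVal φ n x)) ⊗ₜ[ℤ]
      lam (x.1 0)

/-- `D^{gp}_n(M;ℤ)_G`: the image in the coinvariants of the subgroup generated by tuples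
with a vanishing entry in a position `1 ≤ i ≤ n−1`. -/
def DgpGsub (n : ℕ) : AddSubgroup (CgpG (G := G) (M := M) n) :=
  (AddSubgroup.closure
      {z : FreeAbelianGroup (Fin n → M) |
        ∃ (m : Fin n → M) (i : Fin n),
          (i : ℕ) + 1 < n ∧ m i = 0 ∧ z = FreeAbelianGroup.of m}).map
    (QuotientAddGroup.mk' (coinvSub (G := G) (M := M) n))

/-! Words for the multiple conjugation biquandle complex `P_*(X;ℤ)`.
A block `⟨(m,g₁),(m,g₂),…,(m,g_s)⟩` lying in the group component `{m} × G` is encoded as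
`(m, g₁, [g₂,…,g_s]) : M × G × List G` (so blocks are automatically nonempty),
and a word is a list of blocks. -/

/-- The total length `n₁ + ⋯ + n_k` of a word. -/
def lenW (w : List (M × G × List G)) : ℕ := (w.map fun b => b.2.2.length + 1).sum

/-- Apply `⊳ x` entrywise to a block. -/
def underB (b : M × G × List G) (x : M × G) : M × G × List G :=
  (ract b.1 x.2 + ract x.1 (φ x.2) - ract x.1 x.2, x.2⁻¹ * b.2.1 * x.2,
    b.2.2.map fun g => x.2⁻¹ * g * x.2)

/-- Apply `⊚ x` entrywise to a block. -/
def overB (b : M × G × List G) (x : M × G) : M × G × List G :=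
  (ract b.1 (φ x.2), b.2.1, b.2.2)

/-- The block `⟨x₁⁻¹x₂ ⊚ x₁, …, x₁⁻¹x_s ⊚ x₁⟩` (deleted if `s = 1`). -/
def tildeB (b : M × G × List G) : List (M × G × List G) :=
  match b with
  | (_, _, []) => []
  | (m, h, g₂ :: rest) => [(ract m (φ h), h⁻¹ * g₂, rest.map fun g => h⁻¹ * g)]

/-- Make a (possibly deleted) block in the component `{m} × G` out of a list of `G`-entries. -/
def blockOfList (m : M) : List G → List (M × G × List G)
  | [] => []
  | g :: gs => [(m, g, gs)]

/-- The value of the boundary map `∂` of `P_*(X;ℤ)` on a word. -/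
def dPval (w : List (M × G × List G)) : FreeAbelianGroup (List (M × G × List G)) :=
  ∑ i ∈ (Finset.range w.length).attach,
    (fun b =>
      (-1 : ℤ) ^ lenW (w.take (i : ℕ)) •
        (FreeAbelianGroup.of
            ((w.take (i : ℕ)).map (fun c => underB φ c (b.1, b.2.1)) ++ tildeB φ b ++
              (w.drop ((i : ℕ) + 1)).map fun c => overB φ c (b.1, b.2.1)) +
          ∑ j ∈ Finset.range (b.2.2.length + 1),
            (-1 : ℤ) ^ (j + 1) •
              FreeAbelianGroup.of
                (w.take (i : ℕ) ++ blockOfList b.1 ((b.2.1 :: b.2.2).eraseIdx j) ++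
                  w.drop ((i : ℕ) + 1))))
      (w[(i : ℕ)]'(Finset.mem_range.mp i.2))

/-- The boundary map `∂` of the complex `P_*(X;ℤ)` (all degrees at once). -/
def dP : FreeAbelianGroup (List (M × G × List G)) →+
    FreeAbelianGroup (List (M × G × List G)) :=
  FreeAbelianGroup.lift (dPval φ)

/-- `⌊j;μ⌋`, where the strictly increasing map `μ` is encoded by the subset `T` of positions
taken from the first block: the number of elements of `T` that are `≤ j`. -/
def cntT {N : ℕ} (T : Finset (Fin N)) (j : ℕ) : ℕ := (T.filter fun p : Fin N => (p : ℕ) ≤ j).card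

/-- `1`-based lookup in a list of group elements, with `a₀ = 1`. -/
def idxL (l : List G) (i : ℕ) : G := if i = 0 then 1 else l.getD (i - 1) 1

/-- The entry `a_{⌊j;μ⌋} b_{j−⌊j;μ⌋}` (at `0`-based position `j`) of `⟨⟨a⟩⟨b⟩⟩_μ`. -/
def mergeEntry (la lb : List G) (T : Finset (Fin (la.length + lb.length))) (j : ℕ) : G :=
  idxL la (cntT T j) * idxL lb (j + 1 - cntT T j)

/-- The element `⟨x₁⟩⋯⟨⟨a⟩⟨b⟩⟩⋯⟨x_k⟩ = Σ_μ (−1)^{Σ(μ(k)−k)} ⟨…⟩`, where the two merged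
blocks lie in the component `{m} × G`, `w₁` is the prefix and `w₂` the suffix of the word. -/
def mergeExpand (m : M) (la lb : List G) (w₁ w₂ : List (M × G × List G)) :
    FreeAbelianGroup (List (M × G × List G)) :=
  ∑ T ∈ Finset.univ.filter
      fun T : Finset (Fin (la.length + lb.length)) => T.card = la.length,
    (-1 : ℤ) ^ ((∑ p ∈ T, (p : ℕ)) + ∑ kk ∈ Finset.range la.length, kk) •
      FreeAbelianGroup.of
        (w₁ ++ (m, mergeEntry la lb T 0,
            (List.range (la.length + lb.length - 1)).map
              fun j => mergeEntry la lb T (j + 1)) :: w₂)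

/-- `D_n(X;ℤ)`: the subgroup of `P_n(X;ℤ)` generated by
`⟨x₁⟩⋯⟨a⟩⟨b⟩⋯⟨x_k⟩ − ⟨x₁⟩⋯⟨⟨a⟩⟨b⟩⟩⋯⟨x_k⟩` for consecutive blocks in a common component. -/
def Dsub (n : ℕ) : AddSubgroup (FreeAbelianGroup (List (M × G × List G))) :=
  AddSubgroup.closure
    {z | ∃ (w₁ w₂ : List (M × G × List G)) (m : M) (g : G) (gs : List G) (h : G) (hs : List G),
      lenW (w₁ ++ (m, g, gs) :: (m, h, hs) :: w₂) = n ∧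
      z = FreeAbelianGroup.of (w₁ ++ (m, g, gs) :: (m, h, hs) :: w₂) -
          mergeExpand m (g :: gs) (h :: hs) w₁ w₂}

/-- `P_n(X;ℤ)` as the subgroup generated by the words of total length `n`. -/
def Psub (n : ℕ) : AddSubgroup (FreeAbelianGroup (List (M × G × List G))) :=
  AddSubgroup.closure
    {z | ∃ w : List (M × G × List G), lenW w = n ∧ z = FreeAbelianGroup.of w}

/-- `proj_n`, sending a word all of whose blocks are singletons (necessarily `n` of them)
to the corresponding `n`-tuple, and every other word to `0`. -/
def projP (n : ℕ) :
    FreeAbelianGroup (List (M × G × List G)) →+ FreeAbelianGroup (Fin n → M × G) :=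
  FreeAbelianGroup.lift fun w =>
    if h : w.length = n ∧ ∀ b ∈ w, b.2.2.isEmpty = true then
      FreeAbelianGroup.of fun i : Fin n =>
        ((w[(i : ℕ)]'(h.1.symm ▸ i.2)).1, (w[(i : ℕ)]'(h.1.symm ▸ i.2)).2.1)
    else 0

/-- `Φ_{f,λ} = (f ⊗ id_A) ∘ ψ_{n,λ} ∘ γ_n ∘ proj_n : P_n(X;ℤ) → A ⊗_ℤ A`
(the Lean parameter `n` corresponds to the paper's degree `n+1 ≥ 1`). -/
noncomputable def PhiFLam (lam : G → A) (n : ℕ)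
    (f : CgpG (G := G) (M := M) (n + 1) →+ A) :
    FreeAbelianGroup (List (M × G × List G)) →+ TensorProduct ℤ A A :=
  ((TensorProduct.map f.toIntLinearMap (LinearMap.id : A →ₗ[ℤ] A)).toAddMonoidHom.comp
      (psiLam φ lam n)).comp ((gammaMap (n + 1)).comp (projP (n + 1)))

/-!
The summands of `ψ_n` are the tuples obtained from `m` by acting on `m_i` with `g_{k,i}`, which
depends on `k` only through the vertex `h = (g_j^{k_j})_j` of the cube spanned by `g`. Everything
rests on one invariance: if the `G`-entries and the `M`-entries are changed as in the first term of
`∂`, by `⊳ y` to the left of a position and by `⊚ y` to the right of it, then the twisted tuple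
`(m_i g_{k,i})_i` does not change. So the `p`-th inner face of a twisted tuple is again a twisted
tuple: that of the `p`-th deletion face in `C^{BR_U}` if `k_p = 0`, that of the `p`-th conjugation
face if `k_p = 1`. Summing the group cocycle condition over the cube gives the birack cocycle
condition, in which the two outer faces vanish because a cochain on coinvariants does not see a
twist of all entries by a common element.

For words with blocks, only those with at most one block of length two and no longer ones matter,
since `proj` kills everything else. A block of length two contributes the identity
`F (x * y) = F x - F (x with x_p replaced by y)`, where `x * y` is the translated tuple; this is the
same invariance applied to the two halves `k_p = 0`, `k_p = 1` of the cube when `p` is not the first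
position, and the additivity of `λ` when it is. Finally, two adjacent singletons in one component
have `m_i - m_{i+1} = 0`, so normalization kills what is left of `D_n`.
-/

/-! ### Partial products -/

section PartialProd

lemma prod_filter_le_finRange {N : Type*} [Monoid N] {n : ℕ} (f : Fin n → N) (i : Fin n) :
    (((List.finRange n).filter fun j => decide (j ≤ i)).map f).prod =
      Fin.partialProd f i.succ := by
  induction n with
  | zero => exact i.elim0
  | succ n ih =>
    rw [Fin.partialProd_succ', List.finRange_succ]
    cases i using Fin.cases with
    | zero => simp [List.filter_map, Function.comp_def]
    | succ i =>
      rw [← ih (Fin.tail f) i]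
      simp [List.filter_map, Function.comp_def, Fin.tail_def]

lemma partialProd_mul_prod_filter_lt_finRange {N : Type*} [Monoid N] {n : ℕ} (f : Fin n → N)
    (i : Fin n) :
    Fin.partialProd f i.succ * (((List.finRange n).filter fun j => decide (i < j)).map f).prod =
      Fin.partialProd f (Fin.last n) := by
  induction n with
  | zero => exact i.elim0
  | succ n ih =>
    rw [← Fin.succ_last, Fin.partialProd_succ', Fin.partialProd_succ', List.finRange_succ,
      mul_assoc]
    congr 1
    cases i using Fin.cases with
    | zero =>
      simp [Fin.partialProd, List.ofFn_eq_map, List.filter_map, Function.comp_def,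
        List.take_of_length_le, Fin.tail_def]
    | succ i =>
      rw [← ih (Fin.tail f) i]
      simp [List.filter_map, Function.comp_def, Fin.tail_def]

lemma partialProd_removeNth_of_le {N : Type*} [Monoid N] {n : ℕ} (f : Fin (n + 1) → N)
    (p j : Fin (n + 1)) (hj : j ≤ p) :
    Fin.partialProd (p.removeNth f) j = Fin.partialProd f j.castSucc := by
  induction j using Fin.induction with
  | zero => simp
  | succ i ih =>
    have hi : i.castSucc < p := Fin.castSucc_lt_iff_succ_le.2 hj
    rw [Fin.partialProd_succ, ih hi.le, Fin.removeNth, Fin.succAbove_of_castSucc_lt _ _ hi,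
      ← Fin.partialProd_succ, Fin.succ_castSucc]

lemma partialProd_removeNth_of_ge {N : Type*} [Monoid N] {n : ℕ} (f : Fin (n + 1) → N)
    (p j : Fin (n + 1)) (hp : f p = 1) (hj : p ≤ j) :
    Fin.partialProd (p.removeNth f) j = Fin.partialProd f j.succ := by
  rcases hj.eq_or_lt with rfl | hlt
  · rw [partialProd_removeNth_of_le f p p le_rfl, Fin.partialProd_succ, hp, mul_one]
  · induction j using Fin.induction with
    | zero => exact absurd hlt (Fin.not_lt_zero p)
    | succ i ih =>
      have hi : p ≤ i.castSucc := Fin.le_castSucc_iff.2 hlt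
      have ih' : Fin.partialProd (p.removeNth f) i.castSucc =
          Fin.partialProd f i.castSucc.succ := by
        rcases hi.eq_or_lt with rfl | h
        · rw [partialProd_removeNth_of_le _ _ _ le_rfl, Fin.partialProd_succ, hp, mul_one]
        · exact ih hi h
      rw [Fin.partialProd_succ, ih', Fin.removeNth, Fin.succAbove_of_le_castSucc _ _ hi,
        Fin.partialProd_succ f i.succ, Fin.succ_castSucc]

end PartialProd

/-! ### Twisted tuples -/

section Twist

/-- The weight `φ(h₀⋯h_i)·h_{i+1}⋯h_{n-1}`, which is `g_{k,i}` for `h_j = g_j^{k_j}`. The last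
factors are written as a quotient of partial products, so that only `Fin.partialProd` has to be
tracked when `h` changes. -/
def twist {n : ℕ} (h : Fin n → G) (i : Fin n) : G :=
  φ (Fin.partialProd h i.succ) * ((Fin.partialProd h i.succ)⁻¹ * Fin.partialProd h (Fin.last n))

/-- The tuple `(m₀ · twist h 0, …, m_{n-1} · twist h (n-1))`; `ψ` is an alternating sum of these. -/
def twistTuple {n : ℕ} (h : Fin n → G) (m : Fin n → M) : Fin n → M :=
  fun i => ract (m i) (twist φ h i)

/-- The `G`-entries of the word `⟨x₀ ⊳ y⟩⋯⟨y⁻¹x_p ⊚ y⟩⋯⟨x_{n-1} ⊚ y⟩` occurring in `∂`, where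
`h` lists the `G`-entries of `x₀, …, x_{n-1}` and the argument `y` is the `G`-entry of `y`. -/
def translateG {n : ℕ} (p : Fin n) (y : G) (h : Fin n → G) : Fin n → G :=
  fun j => if j < p then y⁻¹ * h j * y else if j = p then y⁻¹ * h p else h j

/-- The counterpart of `translateG` for the `M`-entries of `C^{BR_U}`. -/
def translateM {n : ℕ} (p : Fin n) (y : G) (m : Fin n → M) : Fin n → M :=
  fun j => if j < p then ract (m j) y else ract (m j) (φ y)

lemma ract_ract (m : M) (a b : G) : ract (ract m a) b = ract m (a * b) := by
  simp [ract, smul_smul]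

lemma ract_add (m m' : M) (a : G) : ract (m + m') a = ract m a + ract m' a := by
  simp [ract]

lemma ract_sub (m m' : M) (a : G) : ract (m - m') a = ract m a - ract m' a := by
  simp [ract, smul_sub]

lemma ract_zero (a : G) : ract (0 : M) a = 0 := by
  simp [ract]

lemma partialProd_translateG {n : ℕ} (p : Fin n) (y : G) (h : Fin n → G) (j : Fin (n + 1)) :
    Fin.partialProd (translateG p y h) j =
      y⁻¹ * Fin.partialProd h j * if j ≤ p.castSucc then y else 1 := by
  induction j using Fin.induction with
  | zero => simp
  | succ i ih =>
    rw [Fin.partialProd_succ, Fin.partialProd_succ, ih]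
    rcases lt_trichotomy i p with hi | rfl | hi
    · simp [translateG, hi, hi.le, Fin.le_def, mul_assoc]
    · simp [translateG, Fin.le_def, mul_assoc]
    · have hle : ¬i.succ ≤ p.castSucc := fun h => hi.not_ge (Fin.succ_le_castSucc_iff.1 h).le
      have hle' : ¬i.castSucc ≤ p.castSucc := fun h => hi.not_ge (Fin.castSucc_le_castSucc_iff.1 h)
      rw [if_neg hle, if_neg hle', translateG, if_neg hi.not_gt, if_neg hi.ne']
      group

lemma translateM_zero {n : ℕ} (y : G) (m : Fin (n + 1) → M) :
    translateM φ 0 y m = fun i => ract (m i) (φ y) := by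
  funext i
  rw [translateM, if_neg i.not_lt_zero]

lemma twist_translateG_of_lt (hφ : ∀ g : G, φ g ∈ Subgroup.center G) {n : ℕ} {p i : Fin n}
    (hi : i < p) (y : G) (h : Fin n → G) : y * twist φ (translateG p y h) i = twist φ h i := by
  have hle : i.succ ≤ p.castSucc := Fin.le_def.2 hi
  have hlast : ¬Fin.last n ≤ p.castSucc := p.castSucc_lt_last.not_ge
  have hconj : φ (y⁻¹ * Fin.partialProd h i.succ * y) = φ (Fin.partialProd h i.succ) := by
    rw [map_mul, Subgroup.mem_center_iff.1 (hφ y), map_mul, map_inv, mul_inv_cancel_left]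
  rw [twist, twist, partialProd_translateG, partialProd_translateG, if_pos hle, if_neg hlast,
    hconj, ← mul_assoc, Subgroup.mem_center_iff.1 (hφ _) y]
  group

lemma twist_translateG_of_ge {n : ℕ} {p i : Fin n} (hi : p ≤ i) (y : G) (h : Fin n → G) :
    φ y * twist φ (translateG p y h) i = twist φ h i := by
  have hle : ¬i.succ ≤ p.castSucc := fun hle => hi.not_gt (Fin.le_def.1 hle)
  have hlast : ¬Fin.last n ≤ p.castSucc := p.castSucc_lt_last.not_ge
  rw [twist, twist, partialProd_translateG, partialProd_translateG, if_neg hle, if_neg hlast]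
  simp [mul_assoc]

lemma twistTuple_translate (hφ : ∀ g : G, φ g ∈ Subgroup.center G) {n : ℕ} (p : Fin n) (y : G)
    (h : Fin n → G) (m : Fin n → M) :
    twistTuple φ (translateG p y h) (translateM φ p y m) = twistTuple φ h m := by
  funext i
  rcases lt_or_ge i p with hi | hi
  · rw [twistTuple, translateM, if_pos hi, ract_ract, twist_translateG_of_lt φ hφ hi, twistTuple]
  · rw [twistTuple, translateM, if_neg hi.not_gt, ract_ract, twist_translateG_of_ge φ hi,
      twistTuple]

lemma twist_removeNth_of_le {n : ℕ} {p : Fin (n + 1)} {h : Fin (n + 1) → G} (hp : h p = 1)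
    {j : Fin n} (hj : j.succ ≤ p) : twist φ (p.removeNth h) j = twist φ h j.castSucc := by
  rw [twist, twist, partialProd_removeNth_of_le h p _ hj,
    partialProd_removeNth_of_ge h p _ hp p.le_last, Fin.succ_castSucc, Fin.succ_last]

lemma twist_removeNth_of_ge {n : ℕ} {p : Fin (n + 1)} {h : Fin (n + 1) → G} (hp : h p = 1)
    {j : Fin n} (hj : p ≤ j.succ) : twist φ (p.removeNth h) j = twist φ h j.succ := by
  rw [twist, twist, partialProd_removeNth_of_ge h p _ hp hj,
    partialProd_removeNth_of_ge h p _ hp p.le_last, Fin.succ_last]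

lemma dMmer_twistTuple_of_eq_one {n : ℕ} {p : Fin (n + 1)} {h : Fin (n + 1) → G} (hp : h p = 1)
    (m : Fin (n + 1) → M) :
    dMmer n p (twistTuple φ h m) = twistTuple φ (p.removeNth h) (dMmer n p m) := by
  funext j
  rcases lt_trichotomy j.succ p with hj | hj | hj
  · have hj' : (j : ℕ) + 1 < p := hj
    simp only [dMmer, twistTuple, if_pos hj', twist_removeNth_of_le φ hp hj.le]
  · have hj' : (j : ℕ) + 1 = p := congrArg Fin.val hj
    simp only [dMmer, twistTuple, if_neg hj'.not_lt, if_pos hj', ract_add,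
      ← twist_removeNth_of_le φ hp hj.le, ← twist_removeNth_of_ge φ hp hj.ge]
  · have hj' : (p : ℕ) < j + 1 := hj
    simp only [dMmer, twistTuple, if_neg hj'.not_gt, if_neg hj'.ne',
      twist_removeNth_of_ge φ hp hj.le]

lemma dGconj_eq_removeNth_translateG {n : ℕ} (p : Fin (n + 1)) (g : Fin (n + 1) → G) :
    dGconj n p g = p.removeNth (translateG p (g p) g) := by
  funext j
  rcases lt_or_ge j.castSucc p with hj | hj
  · have hj' : (j : ℕ) < p := hj
    rw [dGconj, if_pos hj', Fin.removeNth, Fin.succAbove_of_castSucc_lt _ _ hj, translateG,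
      if_pos hj]
  · have hj' : ¬(j : ℕ) < p := not_lt.2 hj
    have hlt : p < j.succ := Fin.le_castSucc_iff.1 hj
    rw [dGconj, if_neg hj', Fin.removeNth, Fin.succAbove_of_le_castSucc _ _ hj, translateG,
      if_neg hlt.not_gt, if_neg hlt.ne']

lemma dMconj_eq_dMmer_translateM {n : ℕ} (p : Fin (n + 1)) (g : Fin (n + 1) → G)
    (m : Fin (n + 1) → M) : dMconj φ n p g m = dMmer n p (translateM φ p (g p) m) := by
  funext j
  simp only [dMconj, dMmer, translateM, Fin.lt_def, Fin.val_castSucc, Fin.val_succ]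
  split_ifs <;> first | rfl | omega

lemma dMmer_twistTuple (hφ : ∀ g : G, φ g ∈ Subgroup.center G) {n : ℕ} (p : Fin (n + 1))
    (h : Fin (n + 1) → G) (m : Fin (n + 1) → M) :
    dMmer n p (twistTuple φ h m) = twistTuple φ (dGconj n p h) (dMconj φ n p h m) := by
  have hp : translateG p (h p) h p = 1 := by simp [translateG]
  rw [dGconj_eq_removeNth_translateG, dMconj_eq_dMmer_translateM,
    ← dMmer_twistTuple_of_eq_one φ hp, twistTuple_translate φ hφ]

lemma twistTuple_ract_of_mem_center {n : ℕ} {z : G} (hz : z ∈ Subgroup.center G) (h : Fin n → G)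
    (m : Fin n → M) :
    twistTuple φ h (fun i => ract (m i) z) = fun i => ract (twistTuple φ h m i) z := by
  funext i
  rw [twistTuple, twistTuple, ract_ract, ract_ract, Subgroup.mem_center_iff.1 hz]

lemma init_twistTuple {n : ℕ} (h : Fin (n + 1) → G) (m : Fin (n + 1) → M) :
    Fin.init (twistTuple φ h m) =
      fun i => ract (twistTuple φ (Fin.init h) (Fin.init m) i) (h (Fin.last n)) := by
  funext i
  have hinit : Fin.partialProd (Fin.init h) i.succ = Fin.partialProd h i.castSucc.succ := by
    rw [Fin.partialProd_init, Fin.succ_castSucc]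
  have hlast : Fin.partialProd h (Fin.last (n + 1)) =
      Fin.partialProd (Fin.init h) (Fin.last n) * h (Fin.last n) := by
    rw [← Fin.succ_last, Fin.partialProd_succ, Fin.partialProd_init]
  simp only [Fin.init_def, twistTuple, ract_ract, twist] at hinit hlast ⊢
  rw [hinit, hlast]
  simp only [mul_assoc]

end Twist

/-! ### Alternating sums over the cube -/

section Cube

/-- The alternating sum `Σ_k (-1)^{|k|} F(k)` over the face `k₀ = 0` of the cube. -/
def cubeSum {n : ℕ} : ((Fin (n + 1) → Bool) → A) →+ A :=
  ∑ k : Fin (n + 1) → Bool with k 0 = false,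
    (-1 : ℤ) ^ wt k • Pi.evalAddMonoidHom (fun _ : Fin (n + 1) → Bool => A) k

lemma cubeSum_apply {n : ℕ} (F : (Fin (n + 1) → Bool) → A) :
    cubeSum F = ∑ k : Fin (n + 1) → Bool with k 0 = false, (-1 : ℤ) ^ wt k • F k := by
  simp [cubeSum]

lemma wt_insertNth {n : ℕ} (p : Fin (n + 1)) (b : Bool) (k : Fin n → Bool) :
    wt (p.insertNth b k : Fin (n + 1) → Bool) = (if b then 1 else 0) + wt k := by
  simp [wt, Fin.sum_univ_succAbove _ p]

lemma insertNth_apply_zero {α : Type*} {n : ℕ} {p : Fin (n + 2)} (hp : p ≠ 0) (a : α)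
    (k : Fin (n + 1) → α) : (p.insertNth a k : Fin (n + 2) → α) 0 = k 0 := by
  rw [← Fin.succAbove_ne_zero_zero hp, Fin.insertNth_apply_succAbove]

lemma cubeSum_eq_cubeSum_insertNth {n : ℕ} {p : Fin (n + 2)} (hp : p ≠ 0)
    (F : (Fin (n + 2) → Bool) → A) :
    cubeSum F = cubeSum fun k => F (p.insertNth false k) - F (p.insertNth true k) := by
  simp only [cubeSum_apply, Finset.sum_filter]
  have hequiv (b : Bool) (k : Fin (n + 1) → Bool) :
      Fin.insertNthEquiv (fun _ => Bool) p (b, k) = p.insertNth b k := rfl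
  rw [← (Fin.insertNthEquiv (fun _ => Bool) p).sum_comp, Fintype.sum_prod_type_right]
  refine Finset.sum_congr rfl fun k _ => ?_
  simp only [Fintype.sum_bool, hequiv, insertNth_apply_zero hp, wt_insertNth]
  by_cases hk : k 0 = false
  · simp [hk, pow_add, smul_sub, neg_add_eq_sub]
  · simp [hk]

lemma cubeSum_eq_zero {n : ℕ} {p : Fin (n + 2)} (hp : p ≠ 0) {F : (Fin (n + 2) → Bool) → A}
    (hF : ∀ k, F (p.insertNth false k) = F (p.insertNth true k)) : cubeSum F = 0 := by
  simp only [cubeSum_eq_cubeSum_insertNth hp, hF, sub_self]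
  exact map_zero cubeSum

/-- The vertex `(g₀^{k₀}, …, g_{n-1}^{k_{n-1}})` of the cube spanned by `g`. -/
def vertex {n : ℕ} (g : Fin n → G) (k : Fin n → Bool) : Fin n → G :=
  fun i => if k i then g i else 1

lemma gki_eq_twist {n : ℕ} (g : Fin n → G) (k : Fin n → Bool) (i : Fin n) :
    gki φ g k i = twist φ (vertex g k) i := by
  have hsuffix := partialProd_mul_prod_filter_lt_finRange (vertex g k) i
  rw [twist, ← hsuffix, inv_mul_cancel_left, ← prod_filter_le_finRange]
  rfl

lemma vertex_translateG {n : ℕ} {p : Fin n} {k : Fin n → Bool} (hk : k p = true) (y : G)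
    (g : Fin n → G) : vertex (translateG p y g) k = translateG p y (vertex g k) := by
  funext j
  by_cases hj : j = p
  · subst hj
    simp [vertex, translateG, hk]
  · cases hkj : k j <;> simp [vertex, translateG, hj, hkj]

lemma removeNth_vertex {n : ℕ} (g : Fin (n + 1) → G) (p : Fin (n + 1)) (k : Fin (n + 1) → Bool) :
    p.removeNth (vertex g k) = vertex (p.removeNth g) (p.removeNth k) :=
  rfl

lemma removeNth_vertex_insertNth {n : ℕ} (g : Fin (n + 1) → G) (p : Fin (n + 1)) (b : Bool)
    (k : Fin n → Bool) : p.removeNth (vertex g (p.insertNth b k)) = vertex (p.removeNth g) k := by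
  rw [removeNth_vertex, Fin.removeNth_insertNth]

lemma dGconj_vertex_insertNth_true {n : ℕ} (g : Fin (n + 1) → G) (p : Fin (n + 1))
    (k : Fin n → Bool) : dGconj n p (vertex g (p.insertNth true k)) = vertex (dGconj n p g) k := by
  have hk : (p.insertNth true k : Fin (n + 1) → Bool) p = true := Fin.insertNth_apply_same ..
  have hp : vertex g (p.insertNth true k) p = g p := by simp [vertex]
  rw [dGconj_eq_removeNth_translateG, dGconj_eq_removeNth_translateG, hp, ← vertex_translateG hk,
    removeNth_vertex_insertNth]

lemma vertex_translateG_insertNth_false {n : ℕ} (p : Fin (n + 1)) (y : G) (g : Fin (n + 1) → G)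
    (k : Fin n → Bool) :
    vertex (translateG p y g) (p.insertNth false k) =
      translateG p y (vertex (Function.update g p y) (p.insertNth true k)) := by
  funext j
  induction j using Fin.succAboveCases p with
  | x => simp [vertex, translateG]
  | p i => cases hi : k i <;> simp [vertex, translateG, hi]

lemma vertex_update_insertNth_false {n : ℕ} (p : Fin (n + 1)) (y : G) (g : Fin (n + 1) → G)
    (k : Fin n → Bool) :
    vertex (Function.update g p y) (p.insertNth false k) = vertex g (p.insertNth false k) := by
  funext j
  induction j using Fin.succAboveCases p <;> simp [vertex]

end Cube

/-! ### The pullback of a group cocycle along `ψ` -/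

section PsiPullback

/-- Invariance of a cochain under the diagonal action of `G`: it is a cochain on coinvariants. -/
def IsInvariant (G : Type*) {M B : Type*} [Group G] [AddCommGroup M] [DistribMulAction Gᵐᵒᵖ M]
    {n : ℕ} (c : (Fin n → M) → B) : Prop :=
  ∀ (m : Fin n → M) (g : G), c (fun i => ract (m i) g) = c m

/-- The group cocycle condition `c ∘ ∂^{gp} = 0`. -/
def IsCocycle {n : ℕ} (c : (Fin n → M) → A) : Prop :=
  ∀ m : Fin (n + 1) → M,
    ∑ p : Fin (n + 1), (-1 : ℤ) ^ (p : ℕ) • c (dMmer n p m) +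
      (-1 : ℤ) ^ (n + 1) • c (Fin.init m) = 0

/-- Normalization in the sense of `D^{gp}`, where the last entry is allowed to vanish. -/
def IsNormalized {n : ℕ} (c : (Fin (n + 1) → M) → A) : Prop :=
  ∀ (m : Fin (n + 1) → M) (i : Fin n), m i.castSucc = 0 → c m = 0

/-- The cochain `c ∘ ψ` on `C^{BR_U}`. -/
def psiPullback {n : ℕ} (c : (Fin (n + 1) → M) → A) (g : Fin (n + 1) → G)
    (m : Fin (n + 1) → M) : A :=
  cubeSum fun k => c (twistTuple φ (vertex g k) m)

variable {n : ℕ} {c : (Fin (n + 1) → M) → A}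

lemma psiPullback_eq_zero_of_isNormalized (hc : IsNormalized c) (g : Fin (n + 1) → G)
    {m : Fin (n + 1) → M} {i : Fin n} (hi : m i.castSucc = 0) : psiPullback φ c g m = 0 := by
  have hzero (k : Fin (n + 1) → Bool) : c (twistTuple φ (vertex g k) m) = 0 :=
    hc _ i (by rw [twistTuple, hi, ract_zero])
  simp only [psiPullback, hzero]
  exact map_zero cubeSum

lemma psiPullback_ract_of_mem_center (hc : IsInvariant G c) {z : G} (hz : z ∈ Subgroup.center G)
    (g : Fin (n + 1) → G) (m : Fin (n + 1) → M) :
    psiPullback φ c g (fun i => ract (m i) z) = psiPullback φ c g m := by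
  simp only [psiPullback, twistTuple_ract_of_mem_center φ hz, hc _ z]

lemma psiPullback_congr_tail {g g' : Fin (n + 1) → G} (h : ∀ i, i ≠ 0 → g i = g' i)
    (m : Fin (n + 1) → M) : psiPullback φ c g m = psiPullback φ c g' m := by
  simp only [psiPullback, cubeSum_apply]
  refine Finset.sum_congr rfl fun k hk => ?_
  have hvertex : vertex g k = vertex g' k := by
    funext i
    rcases eq_or_ne i 0 with rfl | hi
    · simp [vertex, (Finset.mem_filter.1 hk).2]
    · rw [vertex, vertex, h i hi]
  rw [hvertex]

lemma apply_twistTuple_congr_tail {B : Type*} {c : (Fin (n + 1) → M) → B}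
    (hφ : ∀ g : G, φ g ∈ Subgroup.center G) (hc : IsInvariant G c) {h h' : Fin (n + 1) → G}
    (hh : ∀ i, i ≠ 0 → h i = h' i) (m : Fin (n + 1) → M) :
    c (twistTuple φ h m) = c (twistTuple φ h' m) := by
  let y := h 0 * (h' 0)⁻¹
  have htranslateG : translateG 0 y h = h' := by
    funext i
    rcases eq_or_ne i 0 with rfl | hi
    · simp [translateG, y]
    · rw [translateG, if_neg i.not_lt_zero, if_neg hi, hh i hi]
  rw [← twistTuple_translate φ hφ 0 y h m, htranslateG, translateM_zero,
    twistTuple_ract_of_mem_center φ (hφ y), hc]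

lemma cubeSum_face_zero (hφ : ∀ g : G, φ g ∈ Subgroup.center G) (hc : IsInvariant G c)
    (g : Fin (n + 2) → G) (m : Fin (n + 2) → M) :
    cubeSum (fun k => c (dMmer (n + 1) 0 (twistTuple φ (vertex g k) m))) = 0 := by
  refine cubeSum_eq_zero (p := 1) (by simp) fun k => ?_
  have hzero : vertex g (Fin.insertNth 1 false k) 0 = vertex g (Fin.insertNth 1 true k) 0 := by
    simp [vertex, insertNth_apply_zero]
  rw [dMmer_twistTuple φ hφ, dMmer_twistTuple φ hφ, dMconj_eq_dMmer_translateM,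
    dMconj_eq_dMmer_translateM, hzero]
  refine apply_twistTuple_congr_tail φ hφ hc (fun i hi => ?_) _
  obtain ⟨j, rfl⟩ := Fin.exists_succ_eq.2 hi
  have hinsert (b : Bool) : (Fin.insertNth 1 b k : Fin (n + 2) → Bool) j.succ.succ = k j.succ := by
    rw [← Fin.one_succAbove_succ, Fin.insertNth_apply_succAbove]
  simp [dGconj, vertex, hinsert]

lemma cubeSum_face_of_ne_zero (hφ : ∀ g : G, φ g ∈ Subgroup.center G) {p : Fin (n + 2)}
    (hp : p ≠ 0) (g : Fin (n + 2) → G) (m : Fin (n + 2) → M) :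
    cubeSum (fun k => c (dMmer (n + 1) p (twistTuple φ (vertex g k) m))) =
      psiPullback φ c (dGdel (n + 1) p g) (dMmer (n + 1) p m) -
        psiPullback φ c (dGconj (n + 1) p g) (dMconj φ (n + 1) p g m) := by
  rw [cubeSum_eq_cubeSum_insertNth hp, psiPullback, psiPullback, ← map_sub]
  congr 1
  funext k
  have hfalse : vertex g (p.insertNth false k) p = 1 := by simp [vertex]
  have htrue : vertex g (p.insertNth true k) p = g p := by simp [vertex]
  rw [Pi.sub_apply, dMmer_twistTuple_of_eq_one φ hfalse, removeNth_vertex_insertNth,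
    dMmer_twistTuple φ hφ, dGconj_vertex_insertNth_true, dMconj_eq_dMmer_translateM, htrue,
    ← dMconj_eq_dMmer_translateM]
  rfl

lemma cubeSum_face_last (hc : IsInvariant G c) (g : Fin (n + 2) → G) (m : Fin (n + 2) → M) :
    cubeSum (fun k => c (Fin.init (twistTuple φ (vertex g k) m))) = 0 := by
  refine cubeSum_eq_zero (p := Fin.last (n + 1)) (Fin.last_pos.ne') fun k => ?_
  have hinit (b : Bool) :
      Fin.init (vertex g ((Fin.last (n + 1)).insertNth b k)) = vertex (Fin.init g) k := by
    funext i
    simp [vertex, Fin.init]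
  simp only [init_twistTuple, hc _ (vertex g _ _), hinit]

lemma psiPullback_dGconj_zero (hφ : ∀ g : G, φ g ∈ Subgroup.center G) (hc : IsInvariant G c)
    (g : Fin (n + 2) → G) (m : Fin (n + 2) → M) :
    psiPullback φ c (dGconj (n + 1) 0 g) (dMconj φ (n + 1) 0 g m) =
      psiPullback φ c (dGdel (n + 1) 0 g) (dMmer (n + 1) 0 m) := by
  rw [← psiPullback_ract_of_mem_center φ hc (hφ (g 0)) _ (dMmer (n + 1) 0 m)]
  rfl

lemma cubeSum_face (hφ : ∀ g : G, φ g ∈ Subgroup.center G) (hc : IsInvariant G c)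
    (p : Fin (n + 2)) (g : Fin (n + 2) → G) (m : Fin (n + 2) → M) :
    cubeSum (fun k => c (dMmer (n + 1) p (twistTuple φ (vertex g k) m))) =
      psiPullback φ c (dGdel (n + 1) p g) (dMmer (n + 1) p m) -
        psiPullback φ c (dGconj (n + 1) p g) (dMconj φ (n + 1) p g m) := by
  rcases eq_or_ne p 0 with rfl | hp
  · rw [cubeSum_face_zero φ hφ hc, psiPullback_dGconj_zero φ hφ hc, sub_self]
  · exact cubeSum_face_of_ne_zero φ hφ hp g m

lemma psiPullback_boundary (hφ : ∀ g : G, φ g ∈ Subgroup.center G) (hc : IsInvariant G c)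
    (hcocycle : IsCocycle c) (g : Fin (n + 2) → G) (m : Fin (n + 2) → M) :
    ∑ p : Fin (n + 2), (-1 : ℤ) ^ (p : ℕ) •
      (psiPullback φ c (dGdel (n + 1) p g) (dMmer (n + 1) p m) -
        psiPullback φ c (dGconj (n + 1) p g) (dMconj φ (n + 1) p g m)) = 0 := by
  have hsum := congrArg cubeSum (funext fun k => hcocycle (twistTuple φ (vertex g k) m))
  have hexpand : (fun k => ∑ p : Fin (n + 2), (-1 : ℤ) ^ (p : ℕ) •
        c (dMmer (n + 1) p (twistTuple φ (vertex g k) m)) +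
        (-1 : ℤ) ^ (n + 2) • c (Fin.init (twistTuple φ (vertex g k) m))) =
      ∑ p : Fin (n + 2), (-1 : ℤ) ^ (p : ℕ) •
        (fun k => c (dMmer (n + 1) p (twistTuple φ (vertex g k) m))) +
      (-1 : ℤ) ^ (n + 2) • fun k => c (Fin.init (twistTuple φ (vertex g k) m)) := by
    funext k
    simp
  rw [hexpand, map_add, map_sum, map_zsmul, cubeSum_face_last φ hc, smul_zero, add_zero] at hsum
  simp only [map_zsmul, cubeSum_face φ hφ hc] at hsum
  exact hsum.trans (map_zero cubeSum)

lemma psiPullback_translate_zero (hφ : ∀ g : G, φ g ∈ Subgroup.center G) (hc : IsInvariant G c)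
    (y : G) (g : Fin (n + 1) → G) (m : Fin (n + 1) → M) :
    psiPullback φ c (translateG 0 y g) (translateM φ 0 y m) = psiPullback φ c g m := by
  rw [← psiPullback_ract_of_mem_center φ hc (hφ y) g m]
  have htail (i : Fin (n + 1)) (hi : i ≠ 0) : translateG 0 y g i = g i := by simp [translateG, hi]
  rw [psiPullback_congr_tail φ htail, translateM_zero]

lemma psiPullback_translate_of_ne_zero (hφ : ∀ g : G, φ g ∈ Subgroup.center G) {p : Fin (n + 1)}
    (hp : p ≠ 0) (y : G) (g : Fin (n + 1) → G) (m : Fin (n + 1) → M) :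
    psiPullback φ c (translateG p y g) (translateM φ p y m) =
      psiPullback φ c g m - psiPullback φ c (Function.update g p y) m := by
  obtain _ | n := n
  · exact absurd (Fin.fin_one_eq_zero p) hp
  simp only [psiPullback]
  rw [cubeSum_eq_cubeSum_insertNth hp, ← map_sub]
  conv_rhs => rw [cubeSum_eq_cubeSum_insertNth hp]
  congr 1
  funext k
  have htrue : (p.insertNth true k : Fin (n + 2) → Bool) p = true := Fin.insertNth_apply_same ..
  simp only [Pi.sub_apply, vertex_translateG htrue, vertex_translateG_insertNth_false,
    vertex_update_insertNth_false, twistTuple_translate φ hφ]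
  abel

end PsiPullback

/-! ### The birack cochain -/

section BiquandleCochain

/-- The tuple `(a₀ - a₁, …, a_{n-2} - a_{n-1}, a_{n-1})` of `M`-entries produced by `γ`. -/
def diffs {n : ℕ} (a : Fin n → M) : Fin n → M :=
  fun j => a j - if h : (j : ℕ) + 1 < n then a ⟨j + 1, h⟩ else 0

/-- The tuple `(x₀ ⊳ y, …, x_{p-1} ⊳ y, y⁻¹x_p ⊚ y, x_{p+1} ⊚ y, …)` occurring in `∂`; the inverse
and the product are those of the group component containing both `x_p` and `y`. -/
def translate {n : ℕ} (p : Fin n) (y : M × G) (x : Fin n → M × G) : Fin n → M × G :=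
  fun j => if j < p then under φ (x j) y else
    if j = p then GAlex.over φ ((x p).1, y.2⁻¹ * (x p).2) y else GAlex.over φ (x j) y

/-- The cochain `(c ⊗ id) ∘ ψ_λ ∘ γ` on tuples of elements of `X`. -/
noncomputable def biquandleCochain {B : Type*} [AddCommGroup B] {n : ℕ} (c : (Fin (n + 1) → M) → A)
    (lam : G → B) (x : Fin (n + 1) → M × G) : A ⊗[ℤ] B :=
  psiPullback φ c (Prod.snd ∘ x) (diffs (Prod.fst ∘ x)) ⊗ₜ lam (x 0).2

lemma diffs_removeNth {n : ℕ} (p : Fin (n + 1)) (a : Fin (n + 1) → M) :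
    diffs (p.removeNth a) = dMmer n p (diffs a) := by
  have hremove : p.removeNth a =
      fun j : Fin n => if (j : ℕ) < p then a j.castSucc else a j.succ := by
    funext j
    simp only [Fin.removeNth, Fin.succAbove, Fin.lt_def, Fin.val_castSucc]
    split_ifs <;> rfl
  funext j
  rw [hremove]
  simp only [diffs, dMmer, Fin.val_castSucc, Fin.val_succ]
  split_ifs <;> first | omega | simp [Fin.succ]

lemma map_inv_mul {B : Type*} [AddCommGroup B] {lam : G → B}
    (hlam : ∀ g h : G, lam (g * h) = lam g + lam h) (g h : G) :
    lam (g⁻¹ * h) = lam h - lam g := by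
  rw [eq_sub_iff_add_eq', ← hlam, mul_inv_cancel_left]

lemma map_conj {B : Type*} [AddCommGroup B] {lam : G → B}
    (hlam : ∀ g h : G, lam (g * h) = lam g + lam h) (g h : G) :
    lam (g⁻¹ * h * g) = lam h := by
  rw [hlam, map_inv_mul hlam, sub_add_cancel]

lemma snd_translate {n : ℕ} (p : Fin n) (y : M × G) (x : Fin n → M × G) :
    Prod.snd ∘ translate φ p y x = translateG p y.2 (Prod.snd ∘ x) := by
  funext j
  simp only [translate, translateG, under, GAlex.over, Function.comp_apply]
  split_ifs <;> rfl

lemma diffs_translate {n : ℕ} {p : Fin n} {y : M × G} {x : Fin n → M × G} (hp : (x p).1 = y.1) :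
    diffs (Prod.fst ∘ translate φ p y x) = translateM φ p y.2 (diffs (Prod.fst ∘ x)) := by
  have hunder (u : M × G) : (under φ u y).1 = ract (u.1 - y.1) y.2 + ract y.1 (φ y.2) := by
    rw [under, ract_sub]
    exact add_sub_right_comm _ _ _
  have hfst (i : Fin n) : (translate φ p y x i).1 = if i < p then
      ract ((x i).1 - y.1) y.2 + ract y.1 (φ y.2) else ract (x i).1 (φ y.2) := by
    simp only [translate]
    split_ifs with hi hip
    · exact hunder _
    · rw [hip]; rfl
    · rfl
  funext j
  simp only [diffs, translateM, Function.comp_apply, hfst]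
  by_cases hj : (j : ℕ) + 1 < n
  · rcases lt_trichotomy (j.val + 1) p with hjp | hjp | hjp
    · have h1 : j < p := Fin.lt_def.2 (by omega)
      have h2 : (⟨j + 1, hj⟩ : Fin n) < p := hjp
      simp [hj, h1, h2, ract_sub]
    · have h1 : j < p := Fin.lt_def.2 (by omega)
      have h2 : (⟨j + 1, hj⟩ : Fin n) = p := Fin.ext hjp
      simp [hj, h1, h2, hp, ract_sub]
    · have h1 : ¬ j < p := by rw [Fin.lt_def]; omega
      have h2 : ¬ (⟨j + 1, hj⟩ : Fin n) < p := fun h => hjp.not_gt h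
      simp [hj, h1, h2, ract_sub]
  · have h1 : ¬ j < p := by rw [Fin.lt_def]; omega
    simp [hj, h1]

lemma biquandleCochain_translate {B : Type*} [AddCommGroup B]
    (hφ : ∀ g : G, φ g ∈ Subgroup.center G) {lam : G → B}
    (hlam : ∀ g h : G, lam (g * h) = lam g + lam h) {n : ℕ} {c : (Fin (n + 1) → M) → A}
    (hc : IsInvariant G c) {p : Fin (n + 1)} {x : Fin (n + 1) → M × G} {y : M × G}
    (hp : (x p).1 = y.1) :
    biquandleCochain φ c lam (translate φ p y x) =
      biquandleCochain φ c lam x - biquandleCochain φ c lam (Function.update x p y) := by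
  have hfst : Prod.fst ∘ Function.update x p y = Prod.fst ∘ x := by
    rw [Function.comp_update, ← hp]
    exact Function.update_eq_self p (Prod.fst ∘ x)
  simp only [biquandleCochain, snd_translate, diffs_translate φ hp, hfst, Function.comp_update]
  rcases eq_or_ne p 0 with rfl | hp0
  · have htail (i : Fin (n + 1)) (hi : i ≠ 0) :
        Function.update (Prod.snd ∘ x) 0 y.2 i = (Prod.snd ∘ x) i := Function.update_of_ne hi _ _
    have hlam0 : lam (translate φ 0 y x 0).2 = lam (x 0).2 - lam y.2 := by
      simp [translate, GAlex.over, map_inv_mul hlam]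
    rw [psiPullback_translate_zero φ hφ hc, psiPullback_congr_tail φ htail, hlam0,
      Function.update_self, TensorProduct.tmul_sub]
  · have hlam0 : lam (translate φ p y x 0).2 = lam (x 0).2 := by
      simp [translate, under, Fin.pos_iff_ne_zero.2 hp0, map_conj hlam]
    rw [psiPullback_translate_of_ne_zero φ hφ hp0, hlam0, Function.update_of_ne hp0.symm,
      TensorProduct.sub_tmul]

lemma biquandleCochain_removeNth_sub {B : Type*} [AddCommGroup B]
    (hφ : ∀ g : G, φ g ∈ Subgroup.center G) {lam : G → B}
    (hlam : ∀ g h : G, lam (g * h) = lam g + lam h) {n : ℕ} {c : (Fin (n + 1) → M) → A}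
    (hc : IsInvariant G c) (p : Fin (n + 2)) (x : Fin (n + 2) → M × G) :
    biquandleCochain φ c lam (p.removeNth x) -
        biquandleCochain φ c lam (p.removeNth (translate φ p (x p) x)) =
      (psiPullback φ c (dGdel (n + 1) p (Prod.snd ∘ x)) (dMmer (n + 1) p (diffs (Prod.fst ∘ x))) -
        psiPullback φ c (dGconj (n + 1) p (Prod.snd ∘ x))
          (dMconj φ (n + 1) p (Prod.snd ∘ x) (diffs (Prod.fst ∘ x)))) ⊗ₜ lam (x 0).2 := by
  let g := Prod.snd ∘ x
  let m := diffs (Prod.fst ∘ x)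
  have hsnd : Prod.snd ∘ p.removeNth (translate φ p (x p) x) = dGconj (n + 1) p g := by
    rw [dGconj_eq_removeNth_translateG]
    exact congrArg p.removeNth (snd_translate φ p (x p) x)
  have hdiffs : diffs (Prod.fst ∘ p.removeNth (translate φ p (x p) x)) =
      dMconj φ (n + 1) p g m := by
    rw [dMconj_eq_dMmer_translateM]
    exact (diffs_removeNth p _).trans (congrArg (dMmer (n + 1) p) (diffs_translate φ rfl))
  have hdel : diffs (Prod.fst ∘ p.removeNth x) = dMmer (n + 1) p m :=
    diffs_removeNth p (Prod.fst ∘ x)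
  have hdel' : Prod.snd ∘ p.removeNth x = dGdel (n + 1) p g := rfl
  rw [biquandleCochain, biquandleCochain, hsnd, hdiffs, hdel, hdel']
  rcases eq_or_ne p 0 with rfl | hp
  · have hlam0 : (Fin.removeNth 0 (translate φ 0 (x 0) x) 0).2 = (Fin.removeNth 0 x 0).2 := by
      simp [Fin.removeNth, translate, GAlex.over]
    rw [psiPullback_dGconj_zero φ hφ hc, hlam0, sub_self, sub_self, TensorProduct.zero_tmul]
  · have hlam0 : lam (p.removeNth (translate φ p (x p) x) 0).2 = lam (x 0).2 := by
      simp [Fin.removeNth, Fin.succAbove_ne_zero_zero hp, translate, under,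
        Fin.pos_iff_ne_zero.2 hp, map_conj hlam]
    have hlam1 : p.removeNth x 0 = x 0 := congrArg x (Fin.succAbove_ne_zero_zero hp)
    rw [hlam0, hlam1, TensorProduct.sub_tmul]

lemma biquandleCochain_boundary {B : Type*} [AddCommGroup B]
    (hφ : ∀ g : G, φ g ∈ Subgroup.center G) {lam : G → B}
    (hlam : ∀ g h : G, lam (g * h) = lam g + lam h) {n : ℕ} {c : (Fin (n + 1) → M) → A}
    (hc : IsInvariant G c) (hcocycle : IsCocycle c) (x : Fin (n + 2) → M × G) :
    ∑ p : Fin (n + 2), (-1 : ℤ) ^ (p : ℕ) •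
      (biquandleCochain φ c lam (p.removeNth x) -
        biquandleCochain φ c lam (p.removeNth (translate φ p (x p) x))) = 0 := by
  simp only [biquandleCochain_removeNth_sub φ hφ hlam hc, TensorProduct.smul_tmul',
    ← TensorProduct.sum_tmul, psiPullback_boundary φ hφ hc hcocycle, TensorProduct.zero_tmul]

lemma biquandleCochain_eq_zero_of_isNormalized {B : Type*} [AddCommGroup B] (lam : G → B) {n : ℕ}
    {c : (Fin (n + 1) → M) → A} (hc : IsNormalized c) {x : Fin (n + 1) → M × G} {i : Fin n}
    (hi : (x i.castSucc).1 = (x i.succ).1) : biquandleCochain φ c lam x = 0 := by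
  have hzero : diffs (Prod.fst ∘ x) i.castSucc = 0 := by simp [diffs, hi, Fin.succ]
  rw [biquandleCochain, psiPullback_eq_zero_of_isNormalized φ hc _ hzero, TensorProduct.zero_tmul]

end BiquandleCochain

/-! ### Cochains on words -/

section Words

variable {H N T : Type*} [AddCommGroup T]

/-- The words all of whose blocks are singletons, i.e. those not killed by `proj`. -/
def AllSingleton (w : List (N × H × List H)) : Prop := ∀ b ∈ w, b.2.2 = []

/-- The word `⟨x₀⟩⋯⟨x_{n-1}⟩` of singleton blocks. -/
def tupleWord {n : ℕ} (x : Fin n → N × H) : List (N × H × List H) :=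
  List.ofFn fun j => ((x j).1, (x j).2, [])

/-- The cochain `F ∘ proj` on words. -/
def wordCochain {n : ℕ} (F : (Fin n → N × H) → T) : FreeAbelianGroup (List (N × H × List H)) →+ T :=
  (FreeAbelianGroup.lift F).comp (projP n)

lemma allSingleton_append {u v : List (N × H × List H)} :
    AllSingleton (u ++ v) ↔ AllSingleton u ∧ AllSingleton v := List.forall_mem_append

lemma allSingleton_cons {b : N × H × List H} {w : List (N × H × List H)} :
    AllSingleton (b :: w) ↔ b.2.2 = [] ∧ AllSingleton w := List.forall_mem_cons

lemma allSingleton_map {f : N × H × List H → N × H × List H}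
    (hf : ∀ b, (f b).2.2 = [] ↔ b.2.2 = []) {w : List (N × H × List H)} :
    AllSingleton (w.map f) ↔ AllSingleton w := by
  simp only [AllSingleton, List.forall_mem_map, hf]

@[simp]
lemma length_tupleWord {n : ℕ} (x : Fin n → N × H) : (tupleWord x).length = n := List.length_ofFn

@[simp]
lemma getElem_tupleWord {n : ℕ} (x : Fin n → N × H) (j : ℕ) (hj : j < (tupleWord x).length) :
    (tupleWord x)[j] =
      ((x ⟨j, length_tupleWord x ▸ hj⟩).1, (x ⟨j, length_tupleWord x ▸ hj⟩).2, []) :=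
  List.getElem_ofFn _

lemma allSingleton_tupleWord {n : ℕ} (x : Fin n → N × H) : AllSingleton (tupleWord x) := by
  simp [AllSingleton, tupleWord, List.mem_ofFn]

lemma AllSingleton.lenW_eq {w : List (N × H × List H)} (hw : AllSingleton w) :
    lenW w = w.length := by
  have hone : (w.map fun b => b.2.2.length + 1) = w.map fun _ => 1 :=
    List.map_congr_left fun b hb => by rw [hw b hb, List.length_nil]
  simp [lenW, hone]

lemma AllSingleton.exists_eq_tupleWord {w : List (N × H × List H)} (hw : AllSingleton w) {n : ℕ}
    (hn : w.length = n) : ∃ x : Fin n → N × H, w = tupleWord x := by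
  subst hn
  refine ⟨fun i => (w[i].1, w[i].2.1), List.ext_getElem (by simp [tupleWord]) fun j hj _ => ?_⟩
  have htail : w[j].2.2 = [] := hw _ (List.getElem_mem hj)
  simp [tupleWord, ← htail]

lemma wordCochain_tupleWord {n : ℕ} (F : (Fin n → N × H) → T) (x : Fin n → N × H) :
    wordCochain F (of (tupleWord x)) = F x := by
  simp [wordCochain, projP, tupleWord, List.mem_ofFn]

lemma wordCochain_of_not_allSingleton {n : ℕ} (F : (Fin n → N × H) → T)
    {w : List (N × H × List H)} (hw : ¬AllSingleton w) : wordCochain F (of w) = 0 := by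
  have hcond : ¬(w.length = n ∧ ∀ b ∈ w, b.2.2.isEmpty = true) := fun h =>
    hw fun b hb => List.isEmpty_iff.1 (h.2 b hb)
  simp only [wordCochain, projP, AddMonoidHom.comp_apply, lift_apply_of, dif_neg hcond, map_zero]

lemma wordCochain_mergeExpand [Group H] {n : ℕ} (F : (Fin n → N × H) → T) (m : N) (g h : H)
    (gs hs : List H) (w₁ w₂ : List (N × H × List H)) :
    wordCochain F (mergeExpand m (g :: gs) (h :: hs) w₁ w₂) = 0 := by
  rw [mergeExpand, map_sum]
  refine Finset.sum_eq_zero fun S _ => ?_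
  rw [map_zsmul, wordCochain_of_not_allSingleton, smul_zero]
  simp [allSingleton_append, allSingleton_cons]

lemma wordCochain_eq_zero_of_mem_Dsub [Group H] {n : ℕ} {F : (Fin (n + 1) → N × H) → T}
    (hF : ∀ (x : Fin (n + 1) → N × H) (i : Fin n), (x i.castSucc).1 = (x i.succ).1 → F x = 0)
    {z : FreeAbelianGroup (List (N × H × List H))} (hz : z ∈ Dsub (n + 1)) :
    wordCochain F z = 0 := by
  suffices hle : Dsub (n + 1) ≤ (wordCochain F).ker from hle hz
  refine (AddSubgroup.closure_le _).2 ?_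
  rintro _ ⟨w₁, w₂, m, g, gs, h, hs, hlen, rfl⟩
  rw [SetLike.mem_coe, AddMonoidHom.mem_ker, map_sub, wordCochain_mergeExpand, sub_zero]
  by_cases hw : AllSingleton (w₁ ++ (m, g, gs) :: (m, h, hs) :: w₂)
  · rw [hw.lenW_eq] at hlen
    obtain ⟨x, hx⟩ := hw.exists_eq_tupleWord hlen
    have hi : w₁.length < n := by
      simp only [List.length_append, List.length_cons] at hlen
      omega
    have hfst (k : ℕ) (hk : k < n + 1) : (tupleWord x)[k]?.map Prod.fst = some (x ⟨k, hk⟩).1 := by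
      simp [hk]
    have hcomponent : some (x ⟨w₁.length, by omega⟩).1 = some (x ⟨w₁.length + 1, by omega⟩).1 := by
      rw [← hfst, ← hfst, ← hx]
      simp
    rw [hx, wordCochain_tupleWord]
    exact hF x ⟨w₁.length, hi⟩ (Option.some.inj hcomponent)
  · exact wordCochain_of_not_allSingleton F hw

lemma take_append_cons_drop_tupleWord {n : ℕ} (p : Fin n) (y : N × H) (x : Fin n → N × H) :
    (tupleWord x).take p ++ (y.1, y.2, []) :: (tupleWord x).drop (p + 1) =
      tupleWord (Function.update x p y) := by
  rw [← List.set_eq_take_cons_drop _ (by simp)]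
  refine List.ext_getElem (by simp) fun j _ hj => ?_
  rcases eq_or_ne (p : ℕ) j with rfl | hne
  · simp
  · have hj' : (⟨j, by simpa using hj⟩ : Fin n) ≠ p := Fin.ne_of_val_ne hne.symm
    simp [hne, hj']

lemma take_append_drop_tupleWord {n : ℕ} (p : Fin (n + 1)) (x : Fin (n + 1) → N × H) :
    (tupleWord x).take p ++ (tupleWord x).drop (p + 1) = tupleWord (p.removeNth x) := by
  rw [← List.eraseIdx_eq_take_drop_succ]
  refine List.ext_getElem (by simp [List.length_eraseIdx, p.is_le]) fun j _ _ => ?_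
  simp only [List.getElem_eraseIdx, getElem_tupleWord, Fin.removeNth, Fin.succAbove, Fin.lt_def,
    Fin.val_castSucc]
  split_ifs <;> rfl

end Words

section WordBoundary

variable {T : Type*} [AddCommGroup T]

lemma take_tupleWord_translate {n : ℕ} (p : Fin n) (y : M × G) (x : Fin n → M × G) :
    ((tupleWord x).take p).map (fun b => underB φ b y) =
      (tupleWord (translate φ p y x)).take p := by
  refine List.ext_getElem (by simp) fun j hj _ => ?_
  have hjp : j < p := by simpa using hj
  have hlt : (⟨j, hjp.trans p.isLt⟩ : Fin n) < p := hjp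
  simp [translate, hlt, underB, under]

lemma drop_tupleWord_translate {n : ℕ} (p : Fin n) (y : M × G) (x : Fin n → M × G) :
    ((tupleWord x).drop (p + 1)).map (fun b => overB φ b y) =
      (tupleWord (translate φ p y x)).drop (p + 1) := by
  refine List.ext_getElem (by simp) fun j hj _ => ?_
  have hjn : p + 1 + j < n := by
    simp only [List.length_map, List.length_drop, length_tupleWord] at hj
    omega
  have hlt : p < (⟨p + 1 + j, hjn⟩ : Fin n) := Nat.lt_of_lt_of_le p.val.lt_succ_self le_self_add
  simp [translate, hlt.not_gt, hlt.ne', overB, GAlex.over]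

/-- The contribution of the block `b` to `∂⟨u⟩⟨b⟩⟨v⟩`. -/
def blockBoundary (u : List (M × G × List G)) (b : M × G × List G) (v : List (M × G × List G)) :
    FreeAbelianGroup (List (M × G × List G)) :=
  (-1 : ℤ) ^ lenW u •
    (of (u.map (fun c => underB φ c (b.1, b.2.1)) ++ tildeB φ b ++
        v.map fun c => overB φ c (b.1, b.2.1)) +
      ∑ j ∈ Finset.range (b.2.2.length + 1),
        (-1 : ℤ) ^ (j + 1) • of (u ++ blockOfList b.1 ((b.2.1 :: b.2.2).eraseIdx j) ++ v))

lemma dPval_eq_sum_blockBoundary (w : List (M × G × List G)) :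
    dPval φ w = ∑ i : Fin w.length, blockBoundary φ (w.take i) w[i] (w.drop (i + 1)) :=
  Finset.sum_bij (fun i _ => ⟨i.1, Finset.mem_range.1 i.2⟩) (fun _ _ => Finset.mem_univ _)
    (fun _ _ _ _ h => Subtype.ext (Fin.mk.inj h))
    (fun j _ => ⟨⟨j, Finset.mem_range.2 j.2⟩, Finset.mem_attach _ _, rfl⟩) (fun _ _ => rfl)

lemma wordCochain_blockBoundary_of_not_allSingleton {n : ℕ} (F : (Fin n → M × G) → T)
    {u v : List (M × G × List G)} (huv : ¬(AllSingleton u ∧ AllSingleton v))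
    (b : M × G × List G) : wordCochain F (blockBoundary φ u b v) = 0 := by
  have hface (b' : List (M × G × List G)) : ¬AllSingleton (u ++ b' ++ v) := by
    rw [allSingleton_append, allSingleton_append]
    tauto
  have hconj (y : M × G) (b' : List (M × G × List G)) :
      ¬AllSingleton (u.map (fun c => underB φ c y) ++ b' ++ v.map fun c => overB φ c y) := by
    rw [allSingleton_append, allSingleton_append, allSingleton_map (by simp [underB]),
      allSingleton_map (by simp [overB])]
    tauto
  simp only [blockBoundary, map_zsmul, map_add, map_sum,
    wordCochain_of_not_allSingleton F (hface _), wordCochain_of_not_allSingleton F (hconj _ _),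
    smul_zero, Finset.sum_const_zero, add_zero]

lemma wordCochain_blockBoundary_long {n : ℕ} (F : (Fin n → M × G) → T)
    (u v : List (M × G × List G)) (m : M) (g h h' : G) (t : List G) :
    wordCochain F (blockBoundary φ u (m, g, h :: h' :: t) v) = 0 := by
  have hconj (y : M × G) : ¬AllSingleton (u.map (fun c => underB φ c y) ++
      tildeB φ (m, g, h :: h' :: t) ++ v.map fun c => overB φ c y) := by
    simp [allSingleton_append, allSingleton_cons, tildeB]
  have hface (j : ℕ) :
      ¬AllSingleton (u ++ blockOfList m ((g :: h :: h' :: t).eraseIdx j) ++ v) := by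
    rcases j with _ | _ | j <;> simp [allSingleton_append, allSingleton_cons, blockOfList]
  simp only [blockBoundary, map_zsmul, map_add, map_sum,
    wordCochain_of_not_allSingleton F (hface _), wordCochain_of_not_allSingleton F (hconj _),
    smul_zero, Finset.sum_const_zero, add_zero]

lemma wordCochain_blockBoundary_singleton {n : ℕ} (F : (Fin n → M × G) → T)
    (p : Fin (n + 1)) (x : Fin (n + 1) → M × G) :
    wordCochain F (blockBoundary φ ((tupleWord x).take p) ((x p).1, (x p).2, [])
        ((tupleWord x).drop (p + 1))) =
      (-1 : ℤ) ^ (p : ℕ) •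
        (F (p.removeNth (translate φ p (x p) x)) - F (p.removeNth x)) := by
  have hsingleton : AllSingleton ((tupleWord x).take p) := fun b hb =>
    allSingleton_tupleWord x b (List.mem_of_mem_take hb)
  have hlen : lenW ((tupleWord x).take p) = p := by
    simp [hsingleton.lenW_eq, p.is_le']
  simp only [blockBoundary, tildeB, blockOfList, take_tupleWord_translate, drop_tupleWord_translate,
    take_append_drop_tupleWord, wordCochain_tupleWord, hlen, List.append_nil, List.length_nil,
    zero_add, Finset.sum_range_one, List.eraseIdx_zero, List.tail_cons, pow_one, neg_smul, one_smul,
    map_zsmul, map_add, map_neg, sub_eq_add_neg]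

lemma wordCochain_blockBoundary_pair {n : ℕ} (F : (Fin n → M × G) → T) (p : Fin n)
    {x : Fin n → M × G} {y : M × G} (hp : (x p).1 = y.1) :
    wordCochain F (blockBoundary φ ((tupleWord x).take p) (y.1, y.2, [(x p).2])
        ((tupleWord x).drop (p + 1))) =
      (-1 : ℤ) ^ lenW ((tupleWord x).take p) •
        (F (translate φ p y x) - F x + F (Function.update x p y)) := by
  have hconj : (tupleWord (translate φ p y x)).take p ++
      (ract y.1 (φ y.2), y.2⁻¹ * (x p).2, []) :: (tupleWord (translate φ p y x)).drop (p + 1) =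
      tupleWord (translate φ p y x) := by
    have hself : translate φ p y x p = (ract y.1 (φ y.2), y.2⁻¹ * (x p).2) := by
      simp [translate, hp, GAlex.over]
    have hfold := take_append_cons_drop_tupleWord p (translate φ p y x p) (translate φ p y x)
    rwa [Function.update_eq_self, hself] at hfold
  have hface : (tupleWord x).take p ++ (y.1, (x p).2, []) :: (tupleWord x).drop (p + 1) =
      tupleWord x := by
    rw [← hp, take_append_cons_drop_tupleWord, Function.update_eq_self]
  simp only [blockBoundary, tildeB, blockOfList, take_tupleWord_translate, drop_tupleWord_translate,
    Finset.sum_range_succ, Finset.sum_range_zero, zero_add, List.map_nil, List.length_cons,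
    List.length_nil, List.eraseIdx_zero, List.tail_cons, List.eraseIdx_cons_succ, List.append_assoc,
    List.singleton_append, take_append_cons_drop_tupleWord, hconj, hface, map_zsmul, map_add,
    wordCochain_tupleWord]
  congr 1
  simp only [pow_one, neg_smul, one_smul, pow_add, neg_mul_neg, one_mul]
  abel

lemma wordCochain_blockBoundary_pair_eq_zero {n : ℕ} {F : (Fin n → M × G) → T}
    (hF : ∀ (p : Fin n) (x : Fin n → M × G) (y : M × G), (x p).1 = y.1 →
      F (translate φ p y x) = F x - F (Function.update x p y))
    {u v : List (M × G × List G)} (hu : AllSingleton u) (hv : AllSingleton v)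
    (hn : u.length + v.length + 1 = n) (m : M) (g h : G) :
    wordCochain F (blockBoundary φ u (m, g, [h]) v) = 0 := by
  obtain ⟨x, hx⟩ := AllSingleton.exists_eq_tupleWord (w := u ++ (m, h, []) :: v) (n := n)
    (allSingleton_append.2 ⟨hu, allSingleton_cons.2 ⟨rfl, hv⟩⟩) (by simpa [add_assoc] using hn)
  let p : Fin n := ⟨u.length, by omega⟩
  have hxu : (tupleWord x).take p = u := by simp [← hx, p]
  have hxv : (tupleWord x).drop (p + 1) = v := by simp [← hx, p]
  have hget : (tupleWord x)[(p : ℕ)]? = some (m, h, []) := by simp [← hx, p]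
  have hxp : (x p).1 = m ∧ (x p).2 = h := by simpa using hget
  have hpair := wordCochain_blockBoundary_pair φ F p (y := (m, g)) hxp.1
  rwa [hF p x (m, g) hxp.1, sub_sub_cancel_left, neg_add_cancel, smul_zero, hxu, hxv,
    hxp.2] at hpair

lemma wordCochain_dPval_tupleWord {n : ℕ} {F : (Fin (n + 1) → M × G) → T}
    (hboundary : ∀ x : Fin (n + 2) → M × G, ∑ p : Fin (n + 2), (-1 : ℤ) ^ (p : ℕ) •
      (F (p.removeNth x) - F (p.removeNth (translate φ p (x p) x))) = 0)
    (x : Fin (n + 2) → M × G) : wordCochain F (dPval φ (tupleWord x)) = 0 := by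
  rw [dPval_eq_sum_blockBoundary, map_sum, ← (finCongr (length_tupleWord x)).symm.sum_comp,
    ← neg_eq_zero, ← hboundary x, ← Finset.sum_neg_distrib]
  refine Finset.sum_congr rfl fun p _ => ?_
  have hterm := wordCochain_blockBoundary_singleton φ F p x
  rw [← neg_sub (F _), smul_neg, ← neg_eq_iff_eq_neg] at hterm
  simpa using hterm

lemma wordCochain_dPval {n : ℕ} {F : (Fin (n + 1) → M × G) → T}
    (htranslate : ∀ (p : Fin (n + 1)) (x : Fin (n + 1) → M × G) (y : M × G), (x p).1 = y.1 →
      F (translate φ p y x) = F x - F (Function.update x p y))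
    (hboundary : ∀ x : Fin (n + 2) → M × G, ∑ p : Fin (n + 2), (-1 : ℤ) ^ (p : ℕ) •
      (F (p.removeNth x) - F (p.removeNth (translate φ p (x p) x))) = 0)
    {w : List (M × G × List G)} (hw : lenW w = n + 2) : wordCochain F (dPval φ w) = 0 := by
  by_cases hsingleton : AllSingleton w
  · obtain ⟨x, rfl⟩ := hsingleton.exists_eq_tupleWord (hsingleton.lenW_eq ▸ hw)
    exact wordCochain_dPval_tupleWord φ hboundary x
  rw [dPval_eq_sum_blockBoundary, map_sum]
  refine Finset.sum_eq_zero fun i _ => ?_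
  by_cases hrest : AllSingleton (w.take i) ∧ AllSingleton (w.drop (i + 1))
  · have hsplit : w = w.take i ++ w[i] :: w.drop (i + 1) := by simp
    rcases hi : w[i] with ⟨m, g, _ | ⟨h, _ | ⟨h', t⟩⟩⟩
    · rw [hsplit, hi] at hsingleton
      exact absurd (allSingleton_append.2 ⟨hrest.1, allSingleton_cons.2 ⟨rfl, hrest.2⟩⟩) hsingleton
    · refine wordCochain_blockBoundary_pair_eq_zero φ htranslate hrest.1 hrest.2 ?_ m g h
      have hlen : lenW (w.take i) + (2 + lenW (w.drop (i + 1))) = n + 2 := by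
        rw [← hw]
        conv_rhs => rw [hsplit, hi]
        simp [lenW]
      rw [hrest.1.lenW_eq, hrest.2.lenW_eq] at hlen
      omega
    · exact wordCochain_blockBoundary_long φ F _ _ m g h h' t
  · exact wordCochain_blockBoundary_of_not_allSingleton φ F hrest _

end WordBoundary

/-! ### Cochains on coinvariants -/

section GroupCochain

/-- The cochain on `M^n` underlying a homomorphism out of `C^{gp}_n(M;ℤ)_G`. -/
def groupCochain {n : ℕ} (f : CgpG (G := G) (M := M) n →+ A) (m : Fin n → M) : A :=
  f (QuotientAddGroup.mk' (coinvSub (G := G) (M := M) n) (of m))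

variable {n : ℕ}

lemma isInvariant_groupCochain (f : CgpG (G := G) (M := M) n →+ A) :
    IsInvariant G (groupCochain f) := by
  intro m g
  refine congrArg f (QuotientAddGroup.eq_iff_sub_mem.2 ?_)
  exact AddSubgroup.subset_closure ⟨m, g, rfl⟩

lemma isCocycle_groupCochain {f : CgpG (G := G) (M := M) n →+ A}
    (hf : f.comp ((QuotientAddGroup.mk' (coinvSub (G := G) (M := M) n)).comp (dgp n)) = 0) :
    IsCocycle (groupCochain f) := by
  intro m
  have hm := DFunLike.congr_fun hf (of m)
  simp only [AddMonoidHom.comp_apply, dgp, lift_apply_of, map_add, map_sum, map_zsmul,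
    AddMonoidHom.zero_apply] at hm
  exact hm

lemma isNormalized_groupCochain {f : CgpG (G := G) (M := M) (n + 1) →+ A}
    (hf : ∀ z ∈ DgpGsub (G := G) (M := M) (n + 1), f z = 0) : IsNormalized (groupCochain f) :=
  fun m i hi => hf _ ⟨of m, AddSubgroup.subset_closure
    ⟨m, i.castSucc, Nat.add_lt_add_right i.isLt 1, hi, rfl⟩, rfl⟩

lemma apply_psiVal (f : CgpG (G := G) (M := M) (n + 1) →+ A) (g : Fin (n + 1) → G)
    (m : Fin (n + 1) → M) :
    f (QuotientAddGroup.mk' (coinvSub (G := G) (M := M) (n + 1)) (psiVal φ n (g, m))) =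
      psiPullback φ (groupCochain f) g m := by
  simp only [psiVal, map_sum, map_zsmul, gki_eq_twist, psiPullback, cubeSum_apply]
  rfl

lemma PhiFLam_eq_wordCochain (lam : G → A) (f : CgpG (G := G) (M := M) (n + 1) →+ A) :
    PhiFLam φ lam n f = wordCochain (biquandleCochain φ (groupCochain f) lam) := by
  have htuple (x : Fin (n + 1) → M × G) :
      TensorProduct.map f.toIntLinearMap LinearMap.id (psiLam φ lam n (gammaMap (n + 1) (of x))) =
        biquandleCochain φ (groupCochain f) lam x := by
    simp only [gammaMap, psiLam, lift_apply_of, TensorProduct.map_tmul]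
    exact congrArg (· ⊗ₜ[ℤ] lam (x 0).2) (apply_psiVal φ f _ _)
  rw [PhiFLam, wordCochain, ← AddMonoidHom.comp_assoc]
  congr 1
  ext x
  simpa using htuple x

end GroupCochain

/-- Let `λ : G → A` be a group homomorphism, `n ≥ 1`, and let
`f : C^{gp}_n(M;ℤ)_G → A` be a normalized group `n`-cocycle (it kills `D^{gp}_n(M;ℤ)_G`
and `f ∘ ∂^{gp}_{n+1} = 0`).  Then `Φ_{f,λ} = (f ⊗ id_A) ∘ ψ_{n,λ} ∘ γ_n ∘ proj_n`
vanishes on `D_n(X;ℤ)` and satisfies `Φ_{f,λ} ∘ ∂_{n+1} = 0` on `P_{n+1}(X;ℤ)`;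
that is, it defines an `n`-cocycle of the `G`-Alexander multiple conjugation biquandle. -/
theorem mcb_cocycle_of_normalized_group_cocycle
    (hφ : ∀ g : G, φ g ∈ Subgroup.center G)
    (lam : G → A) (hlam : ∀ g h : G, lam (g * h) = lam g + lam h) :
    ∀ (n : ℕ) (f : CgpG (G := G) (M := M) (n + 1) →+ A),
      (∀ z ∈ DgpGsub (G := G) (M := M) (n + 1), f z = 0) →
      f.comp ((QuotientAddGroup.mk' (coinvSub (G := G) (M := M) (n + 1))).comp
          (dgp (M := M) (n + 1))) = 0 →
      (∀ z ∈ Dsub (G := G) (M := M) (n + 1), PhiFLam φ lam n f z = 0) ∧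
        (∀ z ∈ Psub (G := G) (M := M) (n + 2), PhiFLam φ lam n f (dP φ z) = 0) := by
  intro n f hnormalized hf
  have hinvariant := isInvariant_groupCochain f
  have hcocycle := isCocycle_groupCochain hf
  rw [PhiFLam_eq_wordCochain]
  refine ⟨fun z hz => wordCochain_eq_zero_of_mem_Dsub (fun x i hi => ?_) hz, fun z hz => ?_⟩
  · exact biquandleCochain_eq_zero_of_isNormalized φ lam (isNormalized_groupCochain hnormalized) hi
  · suffices hle : Psub (n + 2) ≤
        ((wordCochain (biquandleCochain φ (groupCochain f) lam)).comp (dP φ)).ker from hle hz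
    refine (AddSubgroup.closure_le _).2 ?_
    rintro _ ⟨w, hw, rfl⟩
    rw [SetLike.mem_coe, AddMonoidHom.mem_ker, AddMonoidHom.comp_apply, dP, lift_apply_of]
    exact wordCochain_dPval φ (fun p x y hp => biquandleCochain_translate φ hφ hlam hinvariant hp)
      (biquandleCochain_boundary φ hφ hlam hinvariant hcocycle) hw

end GAlex
end
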